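/- arXiv:1706.06036 — 4 statements merged into one kernel-verified Lean document; each statement's English description precedes it below -/
import Mathlib

section
/- Let Γ be a Taylor graph, i.e., a distance-regular graph with diameter 3 and intersection array {k,c_2,1;1,c_2,k}, and suppose Γ contains no 4-claws. Then the intersection array of Γ is one of: {2,1,1;1,1,2}, {3,2,1;1,2,3}, {5,2,1;1,2,5}, {9,4,1;1,4,9}, {13,6,1;1,6,13}, {15,6,1;1,6,15}, {17,8,1;1,8,17}, or {27,10,1;1,10,27}. -/
/-!
A Taylor graph is an antipodal double cover of a complete graph, and so is its distance-two graph
`H`. The neighbours of a vertex are the vertices at distance two from its antipode, so the absence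
of 4-claws says that `H` has no 5-cliques. Write `c` for `c₂`. For a root `ρ` of
`ρ² = (2c + 1 - k)ρ + k` the matrix with entries `ρ` on the diagonal, `-ρ` at antipodal pairs and
`-1` or `1` at adjacent or nonadjacent pairs in `H` is a nonzero multiple `κ` of an idempotent.
Hence its trace is `κ` times a natural number, and up to sign it is a Gram matrix.

If neighbourhoods in `H` are cliques, then `k ≤ 3`. Otherwise a parity count shows that `c` is even.
The `l = (3c - k - 1) / 2` common neighbours of a triangle are pairwise nonadjacent, and
Cauchy–Schwarz between them and the triangle, in the Gram matrix of the negative root, bounds `l`.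
If `k = 2c + 1` this gives `c < 10`; otherwise the roots are odd integers `2r + 1` and `-(2t - 1)`,
and `r = 1`, or `r = 2` and `t ≥ 4`.

The graph induced by `H` on the common neighbours of an edge `xy` is triangle-free and `l`-regular,
and a linear combination of its adjacency matrix, the identity and the all-ones matrix is a
principal submatrix of the Schur complement, with respect to `x` and `y`, of the Gram matrix of the
positive root. Thus nonnegativity of the trace of a square bounds the closed walks in this graph.
For `r = 1` this gives `t ≤ 5`, and `t = 4` fails by integrality. For `r = 2` it forces many closed
walks of length four at the common neighbours of some edge, whereas averaging the Gram matrix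
identity over the three edges of a triangle shows that there are too few.
-/

open SimpleGraph Finset

/-- `G` is a distance-regular graph with diameter `D` and intersection numbers
`b i` (number of neighbours of `y` at distance `i+1` from `x` when `dist x y = i`) and
`c i` (number of neighbours of `y` at distance `i-1` from `x` when `dist x y = i`). -/
def IsDRG {V : Type*} [Fintype V] (G : SimpleGraph V) (D : ℕ) (b c : ℕ → ℕ) : Prop :=
  G.Connected ∧
  (∃ x y : V, G.dist x y = D) ∧
  (∀ x y : V, G.dist x y ≤ D) ∧
  c 0 = 0 ∧ c 1 = 1 ∧ b D = 0 ∧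
  (∀ i ≤ D, ∀ x y : V, G.dist x y = i →
    {z : V | G.Adj y z ∧ G.dist x z = i - 1}.ncard = c i ∧
    {z : V | G.Adj y z ∧ G.dist x z = i + 1}.ncard = b i)

/-- `G` contains a `t`-claw: a vertex together with `t` pairwise nonadjacent neighbours
(an induced `K_{1,t}`). -/
def HasClaw {V : Type*} (G : SimpleGraph V) (t : ℕ) : Prop :=
  ∃ (x : V) (s : Finset V), s.card = t ∧ (∀ y ∈ s, G.Adj x y) ∧
    (s : Set V).Pairwise fun y z => ¬ G.Adj y z

/-- `θ` is an eigenvalue of the (real) adjacency matrix of `G`. -/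
def IsAdjEigenvalue {V : Type*} [Fintype V] (G : SimpleGraph V) [DecidableRel G.Adj]
    (θ : ℝ) : Prop :=
  ∃ v : V → ℝ, v ≠ 0 ∧ (G.adjMatrix ℝ).mulVec v = θ • v

/-- `G` contains an induced quadrangle: vertices `x, z₁, y, z₂` with
`dist x y = dist z₁ z₂ = 2` inducing a 4-cycle. -/
def HasQuadrangle {V : Type*} (G : SimpleGraph V) : Prop :=
  ∃ x z₁ y z₂ : V, G.dist x y = 2 ∧ G.dist z₁ z₂ = 2 ∧
    G.Adj x z₁ ∧ G.Adj z₁ y ∧ G.Adj y z₂ ∧ G.Adj z₂ x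

/-- The diameter-3 intersection array `{β₀,β₁,β₂; γ₁,γ₂,γ₃}`. -/
def arr3 (b c : ℕ → ℕ) (β₀ β₁ β₂ γ₁ γ₂ γ₃ : ℕ) : Prop :=
  b 0 = β₀ ∧ b 1 = β₁ ∧ b 2 = β₂ ∧ c 1 = γ₁ ∧ c 2 = γ₂ ∧ c 3 = γ₃

section Matrices

variable {V : Type*} {M : Matrix V V ℝ} {κ : ℝ}

/-- The Schur complement of the diagonal entry `M x x`, keeping the index set: when `M x x ≠ 0`, the
row and the column of `x` become zero. -/
noncomputable def deflate (M : Matrix V V ℝ) (x : V) : Matrix V V ℝ :=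
  M - (M x x)⁻¹ • Matrix.vecMulVec (M.col x) (M.row x)

lemma deflate_apply (M : Matrix V V ℝ) (x u w : V) :
    deflate M x u w = M u w - M u x * M x w / M x x := by
  simp [deflate, Matrix.vecMulVec_apply, div_eq_inv_mul]

lemma isSymm_deflate (hM : M.IsSymm) (x : V) : (deflate M x).IsSymm :=
  Matrix.IsSymm.ext fun u w => by
    rw [deflate_apply, deflate_apply, hM.apply u w, hM.apply u x, hM.apply x w, mul_comm]

open scoped ComplexOrder MatrixOrder in
lemma posSemidef_sq_sum_sum_le [Finite V] (hM : M.PosSemidef) (s t : Finset V) :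
    (∑ u ∈ s, ∑ w ∈ t, M u w) ^ 2 ≤
      (∑ u ∈ s, ∑ w ∈ s, M u w) * ∑ u ∈ t, ∑ w ∈ t, M u w := by
  classical
  have := Fintype.ofFinite V
  obtain ⟨B, rfl⟩ := CStarAlgebra.nonneg_iff_eq_star_mul_self.mp hM.nonneg
  have hsum (s t : Finset V) : ∑ u ∈ s, ∑ w ∈ t, (star B * B) u w =
      ∑ i, (∑ u ∈ s, B i u) * ∑ w ∈ t, B i w := by
    simp only [Matrix.mul_apply, Matrix.star_apply, star_trivial, sum_mul_sum]
    rw [sum_comm]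
    simp only [sum_comm (s := univ)]
    exact sum_comm
  simp only [hsum, ← sq]
  exact sum_mul_sq_le_sq_mul_sq ..

variable [Fintype V]

lemma posSemidef_of_mul_self_eq_smul (hM : M.IsSymm) (hκ : 0 < κ) (hsq : M * M = κ • M) :
    M.PosSemidef := by
  have hMM : (M * M.conjTranspose).PosSemidef := Matrix.posSemidef_self_mul_conjTranspose M
  rw [Matrix.conjTranspose_eq_transpose_of_trivial, hM.eq, hsq] at hMM
  simpa [smul_smul, hκ.ne'] using hMM.smul (inv_pos.2 hκ).le

lemma exists_nat_trace_eq (hκ : κ ≠ 0) (hsq : M * M = κ • M) : ∃ g : ℕ, M.trace = κ * g := by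
  classical
  have hP : IsIdempotentElem (κ⁻¹ • M) := by
    rw [IsIdempotentElem, smul_mul_smul_comm, hsq, smul_smul, mul_assoc, inv_mul_cancel₀ hκ,
      mul_one]
  have htrace := (LinearMap.IsIdempotentElem.isProj_range _ (hP.map Matrix.toLinAlgEquiv')).trace
  have htoLin := Matrix.trace_toLin'_eq (κ⁻¹ • M)
  rw [Matrix.trace_smul, smul_eq_mul] at htoLin
  exact ⟨_, (inv_mul_eq_iff_eq_mul₀ hκ).1 (htoLin.symm.trans htrace)⟩

lemma deflate_mul_self (hsq : M * M = κ • M) {x : V} (hx : M x x ≠ 0) :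
    deflate M x * deflate M x = κ • deflate M x := by
  set C := Matrix.vecMulVec (M.col x) (M.row x) with hC
  have entry (u w : V) : ∑ z, M u z * M z w = κ * M u w := by
    simpa [Matrix.mul_apply] using congrFun (congrFun hsq u) w
  have hMC : M * C = κ • C := by
    ext u w
    simp [hC, Matrix.mul_apply, Matrix.vecMulVec_apply, ← mul_assoc, ← sum_mul, entry]
  have hCM : C * M = κ • C := by
    ext u w
    simp [hC, Matrix.mul_apply, Matrix.vecMulVec_apply, mul_assoc, ← mul_sum, entry]
    ring
  have hCC : C * C = (κ * M x x) • C := by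
    ext u w
    simp only [hC, Matrix.mul_apply, Matrix.vecMulVec_apply, Matrix.smul_apply, smul_eq_mul,
      Matrix.col_apply, Matrix.row_apply, ← entry, sum_mul]
    exact sum_congr rfl fun z _ => by ring
  simp only [deflate, ← hC, sub_mul, mul_sub, Matrix.mul_smul, Matrix.smul_mul, hsq, hMC, hCM, hCC,
    smul_smul, smul_sub]
  rw [show (M x x)⁻¹ * ((M x x)⁻¹ * (κ * M x x)) = (M x x)⁻¹ * κ by field_simp, sub_self, sub_zero,
    mul_comm]

lemma trace_deflate (hsq : M * M = κ • M) {x : V} (hx : M x x ≠ 0) :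
    (deflate M x).trace = M.trace - κ := by
  have hdot : M.col x ⬝ᵥ M.row x = κ * M x x := by
    simpa [dotProduct, Matrix.mul_apply, mul_comm] using congrFun (congrFun hsq x) x
  rw [deflate, Matrix.trace_sub, Matrix.trace_smul, Matrix.trace_vecMulVec, hdot, smul_eq_mul]
  field_simp

lemma trace_sq_add_nonneg_of_mul_self_eq_smul {ι : Type*} [Fintype ι] [DecidableEq ι]
    (hM : M.IsSymm) (hκ : κ ≠ 0) (hsq : M * M = κ • M) (f : ι → V) {R : Matrix ι ι ℝ}
    (hR : R.IsSymm) (a : ℝ) :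
    0 ≤ ((R * M.submatrix f f + a • 1) ^ 2).trace + a ^ 2 * (M.trace / κ - Fintype.card ι) := by
  set A := M.submatrix id f
  set B := M.submatrix f f
  have hMA : M * A = κ • A := by
    ext u i; simpa [A, Matrix.mul_apply] using congrFun (congrFun hsq u) (f i)
  have hAA : A.transpose * A = κ • B := by
    ext i j
    simpa [A, B, Matrix.mul_apply, hM.apply _ (f i)] using congrFun (congrFun hsq (f i)) (f j)
  have htrA (Q : Matrix ι ι ℝ) : (A * Q * A.transpose).trace = κ * (Q * B).trace := by
    rw [Matrix.mul_assoc, Matrix.trace_mul_comm, Matrix.mul_assoc, hAA, Matrix.mul_smul,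
      Matrix.trace_smul, smul_eq_mul]
  set N := A * R * A.transpose with hN
  have hMN : M * N = κ • N := by simp only [hN, ← Matrix.mul_assoc, hMA, Matrix.smul_mul]
  have htrN : N.trace = κ * (R * B).trace := htrA R
  have htrNN : (N * N).trace = κ ^ 2 * ((R * B) * (R * B)).trace := by
    calc (N * N).trace = (A * (R * (A.transpose * A) * R) * A.transpose).trace := by
          simp only [hN, Matrix.mul_assoc]
      _ = _ := by
          rw [htrA, hAA]
          simp only [Matrix.mul_smul, Matrix.smul_mul, Matrix.trace_smul, smul_eq_mul,
            Matrix.mul_assoc]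
          ring
  have hsymm : (a • M + N).IsSymm := by
    simp [Matrix.IsSymm, hN, Matrix.transpose_mul, hM.eq, hR.eq, Matrix.mul_assoc]
  have htrace : ((a • M + N) * (a • M + N)).trace =
      κ ^ 2 * (((R * B + a • 1) ^ 2).trace + a ^ 2 * (M.trace / κ - Fintype.card ι)) := by
    simp only [sq, mul_add, add_mul, Matrix.smul_mul, Matrix.mul_smul, Matrix.trace_add,
      Matrix.trace_smul, Matrix.trace_mul_comm N M, hsq, hMN, htrN, htrNN, smul_eq_mul, mul_one,
      one_mul, Matrix.trace_one]
    field_simp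
    ring
  have hpos := (Matrix.posSemidef_self_mul_conjTranspose (a • M + N)).trace_nonneg
  rw [Matrix.conjTranspose_eq_transpose_of_trivial, hsymm.eq, htrace] at hpos
  exact (mul_nonneg_iff_of_pos_left (by positivity)).1 hpos

end Matrices

section TriangleFree

variable {V : Type*} [Fintype V] {H : SimpleGraph V} [DecidableRel H.Adj] {l : ℕ}

lemma adjMatrix_mul_of_one (hreg : H.IsRegularOfDegree l) :
    H.adjMatrix ℝ * Matrix.of (fun _ _ => 1) = (l : ℝ) • Matrix.of fun _ _ => 1 := by
  ext u w
  simp [adjMatrix_mul_apply, hreg.degree_eq]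

variable [DecidableEq V]

lemma trace_adjMatrix_sq (hreg : H.IsRegularOfDegree l) :
    (H.adjMatrix ℝ ^ 2).trace = Fintype.card V * l := by
  simp only [sq, Matrix.trace, Matrix.diag_apply, adjMatrix_mul_self_apply_self, hreg.degree_eq,
    sum_const, card_univ, nsmul_eq_mul]

lemma trace_adjMatrix_pow_three (hfree : H.CliqueFree 3) : (H.adjMatrix ℝ ^ 3).trace = 0 := by
  simp only [pow_succ, pow_zero, one_mul, Matrix.trace, Matrix.diag_apply, Matrix.mul_apply,
    adjMatrix_apply, sum_mul]
  refine sum_eq_zero fun u _ => sum_eq_zero fun w _ => sum_eq_zero fun z _ => ?_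
  by_contra hne
  simp only [mul_eq_zero, ite_eq_right_iff, one_ne_zero, imp_false, not_or, not_not] at hne
  exact hfree {u, z, w} (is3Clique_iff.2 ⟨u, z, w, hne.1.1, hne.2.symm, hne.1.2, rfl⟩)

lemma trace_sq_quadratic_adjMatrix (hreg : H.IsRegularOfDegree l) (hfree : H.CliqueFree 3)
    (b c d : ℝ) :
    ((H.adjMatrix ℝ ^ 2 + b • H.adjMatrix ℝ + c • 1 + d • Matrix.of fun _ _ => 1) ^ 2).trace =
      (H.adjMatrix ℝ ^ 4).trace + Fintype.card V * ((b ^ 2 + 2 * c) * l + c ^ 2 +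
        2 * d * (l ^ 2 + b * l + c) + d ^ 2 * Fintype.card V) := by
  set A := H.adjMatrix ℝ
  set J : Matrix V V ℝ := Matrix.of fun _ _ => 1
  set P := A ^ 2 + b • A + c • (1 : Matrix V V ℝ)
  have hAJ : A * J = (l : ℝ) • J := adjMatrix_mul_of_one hreg
  have hPJ : P * J = (l ^ 2 + b * l + c : ℝ) • J := by
    simp only [P, add_mul, sq, Matrix.mul_assoc, hAJ, Matrix.mul_smul, Matrix.smul_mul, smul_smul,
      one_mul, add_smul]
  have hJJ : J * J = (Fintype.card V : ℝ) • J := by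
    ext u w; simp [J, Matrix.mul_apply]
  have hJ : J.trace = Fintype.card V := by simp [J, Matrix.trace]
  have hPP : P * P = A ^ 4 + (2 * b) • A ^ 3 + (b ^ 2 + 2 * c) • A ^ 2 + (2 * b * c) • A +
      c ^ 2 • (1 : Matrix V V ℝ) := by
    simp only [P, pow_succ, pow_zero, add_mul, mul_add, Matrix.mul_smul, Matrix.smul_mul, one_mul,
      mul_one, Matrix.mul_assoc]
    module
  have htrace (P : Matrix V V ℝ) : ((P + d • J) ^ 2).trace =
      (P * P).trace + 2 * d * (P * J).trace + d ^ 2 * (J * J).trace := by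
    simp only [sq, add_mul, mul_add, Matrix.mul_smul, Matrix.smul_mul, Matrix.trace_add,
      Matrix.trace_smul, Matrix.trace_mul_comm J P, smul_eq_mul]
    ring
  rw [htrace, hPP, hPJ, hJJ]
  simp only [Matrix.trace_add, Matrix.trace_smul, hJ, smul_eq_mul, trace_adjMatrix_sq hreg,
    trace_adjMatrix_pow_three hfree, trace_adjMatrix, Matrix.trace_one, A]
  ring

end TriangleFree

section LocalGraph

variable {V : Type*} [Fintype V] [DecidableEq V] (H : SimpleGraph V) [DecidableRel H.Adj]

/-- The common neighbours of `x` and `y`. -/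
abbrev commonNbrs (x y : V) : Finset V := H.neighborFinset x ∩ H.neighborFinset y

/-- The graph induced on the common neighbours of `x` and `y`. -/
abbrev localGraph (x y : V) : SimpleGraph ↥(commonNbrs H x y) := H.comap Subtype.val

/-- The number of closed walks of length four at `z` in `localGraph H x y`, for a common neighbour
`z` of `x` and `y`. It is written as a sum over the midpoint `w` of the walk, without the subtype,
so that its symmetrisation over the triangle `x, y, z` can be evaluated. -/
def localFourWalks (x y z : V) : ℕ :=
  ∑ w ∈ commonNbrs H x y, #(commonNbrs H x y ∩ H.neighborFinset z ∩ H.neighborFinset w) ^ 2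

variable {H} {x y : V} {n : ℕ}

lemma cliqueFree_localGraph (hfree : H.CliqueFree (n + 2)) (hxy : H.Adj x y) :
    (localGraph H x y).CliqueFree n := by
  intro s hs
  have hsH := (hs.map (f := Function.Embedding.subtype _)).mono (map_comap_le _ _)
  refine hfree _ ((hsH.insert (a := y) ?_).insert (a := x) ?_)
  · simp +contextual
  · simp +contextual [hxy]

lemma degree_localGraph (z : ↥(commonNbrs H x y)) :
    (localGraph H x y).degree z = #(commonNbrs H x y ∩ H.neighborFinset (z : V)) := by
  rw [← card_neighborFinset_eq_degree, ← card_map (Function.Embedding.subtype _)]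
  congr 1
  ext w
  simp only [mem_map, mem_neighborFinset, comap_adj, Function.Embedding.subtype_apply,
    Subtype.exists, mem_inter, exists_and_right, exists_eq_right, exists_prop]

lemma sum_localFourWalks (x y : V) :
    ∑ z ∈ commonNbrs H x y, (localFourWalks H x y z : ℝ) =
      ((localGraph H x y).adjMatrix ℝ ^ 4).trace := by
  have hA2 (u w) : ((localGraph H x y).adjMatrix ℝ ^ 2) u w =
      #(commonNbrs H x y ∩ H.neighborFinset (u : V) ∩ H.neighborFinset (w : V)) := by
    simp only [sq, Matrix.mul_apply, adjMatrix_apply, comap_adj, mul_ite, mul_one, mul_zero,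
      ← ite_and]
    rw [sum_coe_sort (commonNbrs H x y)
      fun z => if H.Adj z w ∧ H.Adj u z then (1 : ℝ) else 0, sum_boole]
    congr 2
    ext z
    simp [H.adj_comm z, and_assoc, and_comm]
  simp only [show 4 = 2 + 2 from rfl, pow_add, Matrix.trace, Matrix.diag_apply, Matrix.mul_apply,
    hA2, localFourWalks, Nat.cast_sum, Nat.cast_pow]
  rw [← sum_coe_sort]
  refine sum_congr rfl fun z _ => ?_
  rw [← sum_coe_sort]
  refine sum_congr rfl fun w _ => ?_
  rw [sq, inter_right_comm _ (H.neighborFinset (z : V))]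

lemma exists_adj_three_mul_sum_le {q : V → V → V → ℝ} {K : ℝ}
    (hq : ∀ x y z, H.Adj x y → H.Adj x z → H.Adj y z → q x y z + q x z y + q y z x = K)
    (hne : ∃ x y, H.Adj x y) :
    ∃ x y, H.Adj x y ∧ 3 * ∑ z ∈ commonNbrs H x y, q x y z ≤ K * #(commonNbrs H x y) := by
  let S (f : V → V → V → ℝ) : ℝ :=
    ∑ x, ∑ y, ∑ z, if H.Adj x y ∧ H.Adj x z ∧ H.Adj y z then f x y z else 0
  have hswap (f) : S (fun x y z => f x z y) = S f := by
    refine sum_congr rfl fun x _ => sum_comm.trans ?_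
    refine sum_congr rfl fun y _ => sum_congr rfl fun z _ => if_congr ?_ rfl rfl
    simp only [H.adj_comm z y]; tauto
  have hrot (f) : S (fun x y z => f y z x) = S f := by
    refine sum_comm.trans (sum_congr rfl fun x _ => sum_comm.trans ?_)
    refine sum_congr rfl fun y _ => sum_congr rfl fun z _ => if_congr ?_ rfl rfl
    simp only [H.adj_comm z]; tauto
  have hS (f) : S f = ∑ p : V × V with H.Adj p.1 p.2,
      ∑ z ∈ commonNbrs H p.1 p.2, f p.1 p.2 z := by
    rw [sum_filter, Fintype.sum_prod_type]
    refine sum_congr rfl fun x _ => sum_congr rfl fun y _ => ?_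
    by_cases hxy : H.Adj x y <;>
      simp only [hxy, true_and, false_and, if_true, if_false, sum_const_zero]
    rw [← sum_filter]
    congr 1
    ext z; simp
  have hsum : 3 * S q = S fun _ _ _ => K := by
    calc 3 * S q = S q + S (fun x y z => q x z y) + S (fun x y z => q y z x) := by
          rw [hswap q, hrot q]; ring
      _ = S fun _ _ _ => K := by
          simp only [S, ← sum_add_distrib]
          refine sum_congr rfl fun x _ => sum_congr rfl fun y _ => sum_congr rfl fun z _ => ?_
          split_ifs with h
          · exact hq x y z h.1 h.2.1 h.2.2
          · simp
  obtain ⟨x, y, hxy⟩ := hne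
  rw [hS, hS, mul_sum] at hsum
  obtain ⟨p, hp, hle⟩ := exists_le_of_sum_le ⟨(x, y), by simpa using hxy⟩ hsum.le
  refine ⟨p.1, p.2, by simpa using hp, hle.trans_eq ?_⟩
  rw [sum_const, nsmul_eq_mul, mul_comm]

end LocalGraph

section Involution

variable {V : Type*} [Fintype V] {bar : V → V}

lemma sum_univ_eq_two_mul_sum (hbar : Function.Involutive bar) {s : Finset V}
    (hs : ∀ w, bar w ∈ s ↔ w ∉ s) {F : V → ℝ} (hF : ∀ w, F (bar w) = F w) :
    ∑ w, F w = 2 * ∑ w ∈ s, F w := by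
  classical
  rw [← sum_add_sum_compl s F, two_mul, add_right_inj]
  exact sum_nbij' bar bar (by simp [hs]) (by simp [hs]) (by simp [hbar _])
    (by simp [hbar _]) (by simp [hF])

end Involution

/-- `H` is a `k`-regular antipodal double cover of a complete graph, with antipodal map `bar`, in
which two adjacent vertices have `c` common neighbours: of two vertices in different fibres, `x` is
adjacent to exactly one of `y` and `bar y`. Taylor graphs and their distance-two graphs are of this
kind. Connectedness is not required. -/
structure IsTaylorCover {V : Type*} [Fintype V] [DecidableEq V] (H : SimpleGraph V)
    [DecidableRel H.Adj] (bar : V → V) (k c : ℕ) : Prop where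
  involutive : Function.Involutive bar
  bar_ne (x : V) : bar x ≠ x
  not_adj_bar (x : V) : ¬ H.Adj x (bar x)
  adj_bar_iff {x y : V} : y ≠ x → y ≠ bar x → (H.Adj x (bar y) ↔ ¬ H.Adj x y)
  regular : H.IsRegularOfDegree k
  card_common {x y : V} : H.Adj x y → #(commonNbrs H x y) = c

namespace IsTaylorCover

variable {V : Type*} [Fintype V] [DecidableEq V] {H : SimpleGraph V} [DecidableRel H.Adj]
  {bar : V → V} {k c : ℕ} {x y z u w : V}

lemma not_adj_bar_of_adj (h : IsTaylorCover H bar k c) (hxy : H.Adj x y) : ¬ H.Adj x (bar y) := by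
  have hne : y ≠ bar x := by rintro rfl; exact h.not_adj_bar x hxy
  exact fun hb => (h.adj_bar_iff hxy.ne' hne).1 hb hxy

lemma ne_bar_of_adj (h : IsTaylorCover H bar k c) (hu : H.Adj x u) (hw : H.Adj x w) :
    u ≠ bar w := by
  rintro rfl
  exact h.not_adj_bar_of_adj hw hu

lemma bar_adj_iff (h : IsTaylorCover H bar k c) : H.Adj (bar x) y ↔ H.Adj x (bar y) := by
  by_cases e : y = x
  · subst e; simp only [h.not_adj_bar, H.adj_comm (bar y)]
  by_cases e' : y = bar x
  · subst e'; simp [h.involutive x]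
  have e'' : x ≠ bar y := fun hx => e' (by rw [hx, h.involutive])
  rw [h.adj_bar_iff e e', H.adj_comm, h.adj_bar_iff (Ne.symm e) e'', H.adj_comm]

lemma bar_mem_insert_neighborFinset (h : IsTaylorCover H bar k c) (x w : V) :
    bar w ∈ insert x (H.neighborFinset x) ↔ w ∉ insert x (H.neighborFinset x) := by
  simp only [mem_insert, mem_neighborFinset, not_or]
  by_cases e : w = x
  · subst e; simp [h.bar_ne, h.not_adj_bar]
  by_cases e' : w = bar x
  · subst e'; simp [h.involutive x, h.bar_ne, h.not_adj_bar]
  have e'' : bar w ≠ x := fun e2 => e' (by rw [← e2, h.involutive])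
  simp [e, e'', h.adj_bar_iff e e']

lemma sum_univ_eq (h : IsTaylorCover H bar k c) {F : V → ℝ} (hF : ∀ w, F (bar w) = F w) (x : V) :
    ∑ w, F w = 2 * (F x + ∑ w ∈ H.neighborFinset x, F w) := by
  rw [sum_univ_eq_two_mul_sum h.involutive (h.bar_mem_insert_neighborFinset x) hF, sum_insert]
  simp

lemma card_eq (h : IsTaylorCover H bar k c) [Nonempty V] : Fintype.card V = 2 * (k + 1) := by
  have := h.sum_univ_eq (F := fun _ => 1) (fun _ => rfl) (Classical.arbitrary V)
  simp only [sum_const, card_univ, nsmul_eq_mul, mul_one, card_neighborFinset_eq_degree,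
    h.regular.degree_eq] at this
  rw [add_comm k]
  exact_mod_cast this

lemma sum_univ_eq_of_triangle (h : IsTaylorCover H bar k c) {F : V → ℝ}
    (hF : ∀ w, F (bar w) = F w) (hxy : H.Adj x y) (hxz : H.Adj x z) (hyz : H.Adj y z) :
    ∑ w, F w = 2 * (∑ w ∈ commonNbrs H x y, F w +
      ∑ w ∈ commonNbrs H x z, F w +
      ∑ w ∈ commonNbrs H y z, F w -
      2 * ∑ w ∈ commonNbrs H x y ∩ H.neighborFinset z, F w) := by
  let maj : Finset V := {w | (H.Adj x w ∧ H.Adj y w) ∨ (H.Adj x w ∧ H.Adj z w) ∨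
    (H.Adj y w ∧ H.Adj z w)}
  have hmem (w : V) : w ∈ maj ↔ (w ∈ insert x (H.neighborFinset x) ∧
      w ∈ insert y (H.neighborFinset y)) ∨ (w ∈ insert x (H.neighborFinset x) ∧
      w ∈ insert z (H.neighborFinset z)) ∨ (w ∈ insert y (H.neighborFinset y) ∧
      w ∈ insert z (H.neighborFinset z)) := by
    simp only [maj, mem_filter, mem_univ, true_and, mem_insert, mem_neighborFinset]
    by_cases hx : w = x
    · subst hx; simp [hxy.symm, hxz.symm]
    by_cases hy : w = y
    · subst hy; simp [hxy, hyz.symm]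
    by_cases hz : w = z
    · subst hz; simp [hxz, hyz]
    simp [hx, hy, hz]
  have hmaj (w : V) : bar w ∈ maj ↔ w ∉ maj := by
    simp only [hmem, h.bar_mem_insert_neighborFinset]
    tauto
  rw [sum_univ_eq_two_mul_sum h.involutive hmaj hF]
  have hind (s : Finset V) : ∑ w ∈ s, F w = ∑ w, if w ∈ s then F w else 0 := by simp
  simp only [hind, mul_sum, ← sum_add_distrib, ← sum_sub_distrib]
  refine sum_congr rfl fun w _ => ?_
  by_cases hx : H.Adj x w <;> by_cases hy : H.Adj y w <;> by_cases hz : H.Adj z w <;>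
    simp [maj, hx, hy, hz]
  ring

lemma two_mul_card_add_eq (h : IsTaylorCover H bar k c) (hxy : H.Adj x y) (hxz : H.Adj x z)
    (hyz : H.Adj y z) : 2 * #(commonNbrs H x y ∩ H.neighborFinset z) + (k + 1) = 3 * c := by
  have : Nonempty V := ⟨x⟩
  have hsum := h.sum_univ_eq_of_triangle (F := fun _ => 1) (fun _ => rfl) hxy hxz hyz
  simp only [sum_const, card_univ, nsmul_eq_mul, mul_one, h.card_eq, h.card_common hxy,
    h.card_common hxz, h.card_common hyz] at hsum
  push_cast at hsum
  have : (2 * #(commonNbrs H x y ∩ H.neighborFinset z) + (k + 1) : ℝ) = 3 * c := by linarith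
  exact_mod_cast this

lemma card_eq_card_inter_add (h : IsTaylorCover H bar k c) {s : Finset V} (hz : z ∉ s)
    (hz' : bar z ∉ s) : #s = #(s ∩ H.neighborFinset z) + #(s ∩ H.neighborFinset (bar z)) := by
  rw [← card_inter_add_card_sdiff s (H.neighborFinset z)]
  congr 2
  ext w
  simp only [mem_sdiff, mem_inter, mem_neighborFinset, and_congr_right_iff, h.bar_adj_iff]
  intro hw
  rw [h.adj_bar_iff]
  · rintro rfl; exact hz hw
  · rintro rfl; exact hz' hw

lemma two_dvd_of_adj_of_adj_bar (h : IsTaylorCover H bar k c) (hxy : H.Adj x y) (hxz : H.Adj x z)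
    (hyz : H.Adj y (bar z)) : 2 ∣ c := by
  have hyz' : ¬ H.Adj y z := h.involutive z ▸ h.not_adj_bar_of_adj hyz
  have hxbz := h.not_adj_bar_of_adj hxz
  have hxby := h.not_adj_bar_of_adj hxy
  have e₁ := h.card_eq_card_inter_add (s := commonNbrs H x y) (z := z) (by simp [hyz'])
    (by simp [hxbz])
  have e₂ := h.card_eq_card_inter_add (s := commonNbrs H x z) (z := y)
    (by simp [H.adj_comm z, hyz']) (by simp [hxby])
  have e₃ := h.card_eq_card_inter_add (s := commonNbrs H y (bar z)) (z := x)
    (by simp [H.adj_comm _ x, hxbz]) (by simp [H.adj_comm y, h.bar_adj_iff, hxby])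
  have e₄ : #(commonNbrs H y (bar z) ∩ H.neighborFinset (bar x)) =
      #(commonNbrs H x z ∩ H.neighborFinset (bar y)) := by
    refine card_bij' (fun w _ => bar w) (fun w _ => bar w) ?_ ?_ (by simp [h.involutive _])
      (by simp [h.involutive _]) <;>
    · simp only [mem_inter, mem_neighborFinset, h.bar_adj_iff, h.involutive _]
      tauto
  have e₅ : commonNbrs H x z ∩ H.neighborFinset y = commonNbrs H x y ∩ H.neighborFinset z :=
    inter_right_comm ..
  have e₆ : commonNbrs H y (bar z) ∩ H.neighborFinset x =
      commonNbrs H x y ∩ H.neighborFinset (bar z) := by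
    rw [inter_right_comm, inter_comm (H.neighborFinset y)]
  rw [h.card_common hxy] at e₁
  rw [h.card_common hxz, e₅] at e₂
  rw [h.card_common hyz, e₄, e₆] at e₃
  omega

lemma card_commonNbrs_bar (h : IsTaylorCover H bar k c) (hxy : H.Adj x y) :
    #(commonNbrs H x (bar y)) + c + 1 = k := by
  have hy : y ∈ H.neighborFinset x := by simpa
  have e := h.card_eq_card_inter_add (s := (H.neighborFinset x).erase y) (z := y) (by simp)
    (by simp [h.not_adj_bar_of_adj hxy])
  have hy₁ : y ∉ commonNbrs H x y := by simp
  have hy₂ : y ∉ commonNbrs H x (bar y) := by simp [H.adj_comm (bar y), h.not_adj_bar]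
  rw [erase_inter, erase_inter, erase_eq_of_notMem hy₁, erase_eq_of_notMem hy₂,
    h.card_common hxy] at e
  have hcard := card_erase_add_one hy
  rw [card_neighborFinset_eq_degree, h.regular.degree_eq] at hcard
  omega

end IsTaylorCover

lemma inter_neighborFinset_eq_empty_of_cliqueFree {V : Type*} [Fintype V] [DecidableEq V]
    {H : SimpleGraph V} [DecidableRel H.Adj] (hfree : H.CliqueFree 5) {x y z u : V}
    (hxy : H.Adj x y) (hxz : H.Adj x z) (hyz : H.Adj y z)
    (hu : u ∈ commonNbrs H x y ∩ H.neighborFinset z) :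
    commonNbrs H x y ∩ H.neighborFinset z ∩ H.neighborFinset u = ∅ := by
  refine eq_empty_of_forall_notMem fun w hw => ?_
  simp only [mem_inter, mem_neighborFinset] at hu hw
  have hzuw : H.IsNClique 3 {z, u, w} := is3Clique_iff.2 ⟨z, u, w, hu.2, hw.1.2, hw.2, rfl⟩
  refine hfree _ ((hzuw.insert (a := y) ?_).insert (a := x) ?_)
  · simp [hyz, hu.1.2, hw.1.1.2]
  · simp [hxy, hxz, hu.1.1, hw.1.1.1]

section Gram

variable {V : Type*} [DecidableEq V]

/-- The matrix with entries `ρ` on the diagonal, `-ρ` at antipodal pairs and `-1` or `1` at adjacent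
or nonadjacent pairs of vertices. If `ρ ^ 2 = (2 * c + 1 - k) * ρ + k`, then it is the Gram matrix
of a vector representation for `ρ > 0`, and its negative is one for `ρ < 0`. -/
def gram (H : SimpleGraph V) [DecidableRel H.Adj] (bar : V → V) (ρ : ℝ) : Matrix V V ℝ :=
  Matrix.of fun u w =>
    if u = w then ρ else if bar u = w then -ρ else if H.Adj u w then -1 else 1

lemma gram_self (H : SimpleGraph V) [DecidableRel H.Adj] (bar : V → V) (ρ : ℝ) (u : V) :
    gram H bar ρ u u = ρ := by
  simp [gram]

lemma trace_gram [Fintype V] (H : SimpleGraph V) [DecidableRel H.Adj] (bar : V → V) (ρ : ℝ) :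
    (gram H bar ρ).trace = ρ * Fintype.card V := by
  simp [Matrix.trace, gram_self, mul_comm]

end Gram

namespace IsTaylorCover

variable {V : Type*} [Fintype V] [DecidableEq V] {H : SimpleGraph V} [DecidableRel H.Adj]
  {bar : V → V} {k c : ℕ} {x y z u w : V} {ρ : ℝ}

lemma gram_of_adj (h : IsTaylorCover H bar k c) (huw : H.Adj u w) : gram H bar ρ u w = -1 := by
  have hbar : bar u ≠ w := by rintro rfl; exact h.not_adj_bar u huw
  simp [gram, huw, huw.ne, hbar]

lemma gram_of_adj_bar (h : IsTaylorCover H bar k c) (huw : H.Adj u (bar w)) :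
    gram H bar ρ u w = 1 := by
  have hne : u ≠ w := by rintro rfl; exact h.not_adj_bar u huw
  have hbar : bar u ≠ w := by rintro rfl; exact huw.ne (h.involutive u).symm
  have hadj : ¬ H.Adj u w := fun hadj => h.not_adj_bar_of_adj hadj huw
  simp [gram, hne, hbar, hadj]

lemma gram_bar_self (h : IsTaylorCover H bar k c) : gram H bar ρ u (bar u) = -ρ := by
  simp [gram, (h.bar_ne u).symm]

lemma eq_or_eq_bar_or_adj_or_adj_bar (h : IsTaylorCover H bar k c) (u w : V) :
    w = u ∨ w = bar u ∨ H.Adj u w ∨ H.Adj u (bar w) := by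
  by_cases e : w = u
  · exact .inl e
  by_cases e' : w = bar u
  · exact .inr (.inl e')
  · rw [h.adj_bar_iff e e']
    tauto

lemma gram_of_ne_bar (h : IsTaylorCover H bar k c) (hw : w ≠ bar u) :
    gram H bar ρ u w = 1 - 2 * (if H.Adj u w then 1 else 0) + if u = w then ρ - 1 else 0 := by
  obtain rfl | rfl | hadj | hadj := h.eq_or_eq_bar_or_adj_or_adj_bar u w
  · simp [gram_self]
  · exact absurd rfl hw
  · norm_num [h.gram_of_adj hadj, hadj, hadj.ne]
  · have hadj' : ¬ H.Adj u w := fun hadj' => h.not_adj_bar_of_adj hadj' hadj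
    have hne : u ≠ w := by rintro rfl; exact h.not_adj_bar u hadj
    simp [h.gram_of_adj_bar hadj, hadj', hne]

lemma gram_isSymm (h : IsTaylorCover H bar k c) : (gram H bar ρ).IsSymm := by
  refine Matrix.IsSymm.ext fun u w => ?_
  obtain rfl | rfl | hadj | hadj := h.eq_or_eq_bar_or_adj_or_adj_bar u w
  · rfl
  · rw [h.gram_bar_self]
    nth_rw 2 [← h.involutive u]
    rw [h.gram_bar_self]
  · rw [h.gram_of_adj hadj, h.gram_of_adj hadj.symm]
  · rw [h.gram_of_adj_bar hadj, h.gram_of_adj_bar (h.bar_adj_iff.1 hadj.symm)]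

lemma gram_bar (h : IsTaylorCover H bar k c) : gram H bar ρ u (bar w) = -gram H bar ρ u w := by
  obtain rfl | rfl | hadj | hadj := h.eq_or_eq_bar_or_adj_or_adj_bar u w
  · rw [h.gram_bar_self, gram_self]
  · rw [h.involutive, h.gram_bar_self, gram_self, neg_neg]
  · rw [h.gram_of_adj hadj, h.gram_of_adj_bar (by rwa [h.involutive]), neg_neg]
  · rw [h.gram_of_adj_bar hadj, h.gram_of_adj hadj]

lemma sum_gram (h : IsTaylorCover H bar k c) {s : Finset V} (hs : bar w ∉ s) :
    ∑ u ∈ s, gram H bar ρ w u =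
      #s - 2 * #(s ∩ H.neighborFinset w) + if w ∈ s then ρ - 1 else 0 := by
  have hne (u) (hu : u ∈ s) : u ≠ bar w := by rintro rfl; exact hs hu
  rw [sum_congr rfl fun u hu => h.gram_of_ne_bar (hne u hu), sum_add_distrib, sum_sub_distrib,
    ← mul_sum]
  simp [← mem_neighborFinset, sum_ite_mem]

lemma gram_mul_self (h : IsTaylorCover H bar k c) (hρ : ρ ^ 2 = (2 * c + 1 - k) * ρ + k) :
    gram H bar ρ * gram H bar ρ = (2 * (2 * ρ - (2 * c + 1 - k))) • gram H bar ρ := by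
  ext u w
  have hsum (w : V) : ∑ z, gram H bar ρ u z * gram H bar ρ w z =
      2 * (ρ * gram H bar ρ w u - ∑ z ∈ H.neighborFinset u, gram H bar ρ w z) := by
    rw [h.sum_univ_eq (by simp [h.gram_bar]) u, gram_self, ← sub_neg_eq_add, ← sum_neg_distrib]
    congr 2
    refine sum_congr rfl fun z hz => ?_
    rw [h.gram_of_adj ((mem_neighborFinset ..).1 hz), neg_one_mul, neg_neg]
  have hself : ∑ z, gram H bar ρ u z * gram H bar ρ u z =
      2 * (2 * ρ - (2 * c + 1 - k)) * ρ := by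
    rw [hsum, h.sum_gram (by simp [h.not_adj_bar]), gram_self]
    simp only [card_neighborFinset_eq_degree, h.regular.degree_eq, inter_self,
      mem_neighborFinset, SimpleGraph.irrefl, ↓reduceIte, add_zero]
    linarith
  have hadj {w : V} (huw : H.Adj u w) : ∑ z, gram H bar ρ u z * gram H bar ρ w z =
      2 * (2 * ρ - (2 * c + 1 - k)) * -1 := by
    rw [hsum, h.sum_gram (by simp [h.not_adj_bar_of_adj huw]), h.gram_of_adj huw.symm,
      h.card_common huw]
    simp only [mul_neg, mul_one, card_neighborFinset_eq_degree, h.regular.degree_eq,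
      mem_neighborFinset, huw, ↓reduceIte]
    ring
  have hneg (w : V) : ∑ z, gram H bar ρ u z * gram H bar ρ w z =
      - ∑ z, gram H bar ρ u z * gram H bar ρ (bar w) z := by
    simp only [h.gram_isSymm.apply _ (bar w), h.gram_isSymm.apply _ w, h.gram_bar, mul_neg,
      sum_neg_distrib, neg_neg]
  have hmul : (gram H bar ρ * gram H bar ρ) u w = ∑ z, gram H bar ρ u z * gram H bar ρ w z := by
    simp only [Matrix.mul_apply, h.gram_isSymm.apply w]
  rw [hmul, Matrix.smul_apply, smul_eq_mul]
  obtain rfl | rfl | huw | huw := h.eq_or_eq_bar_or_adj_or_adj_bar u w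
  · rw [hself, gram_self]
  · rw [hneg, h.involutive, hself, h.gram_bar_self, mul_neg]
  · rw [hadj huw, h.gram_of_adj huw]
  · rw [hneg, hadj huw, h.gram_of_adj_bar huw, mul_neg, neg_neg]

lemma sum_gram_of_mem (h : IsTaylorCover H bar k c) (hfree : H.CliqueFree 5) (hxy : H.Adj x y)
    (hxz : H.Adj x z) (hyz : H.Adj y z) (hw : w ∈ commonNbrs H x y ∩ H.neighborFinset z) :
    ∑ u ∈ commonNbrs H x y ∩ H.neighborFinset z, gram H bar ρ w u =
      #(commonNbrs H x y ∩ H.neighborFinset z) + ρ - 1 := by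
  have hbar : bar w ∉ commonNbrs H x y ∩ H.neighborFinset z := by
    simp only [mem_inter, mem_neighborFinset] at hw ⊢
    exact fun hw' => h.not_adj_bar_of_adj hw.2 hw'.2
  rw [h.sum_gram hbar, inter_neighborFinset_eq_empty_of_cliqueFree hfree hxy hxz hyz hw, if_pos hw]
  simp [add_sub_assoc]

lemma three_mul_card_le (h : IsTaylorCover H bar k c) (hfree : H.CliqueFree 5) (hxy : H.Adj x y)
    (hxz : H.Adj x z) (hyz : H.Adj y z)
    (hne : (commonNbrs H x y ∩ H.neighborFinset z).Nonempty) {R : ℝ} (hR : 0 < R)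
    (hRsq : R ^ 2 = k - (2 * c + 1 - k) * R) :
    3 * (#(commonNbrs H x y ∩ H.neighborFinset z) : ℝ) ≤
      (R + 2) * (R + 1 - #(commonNbrs H x y ∩ H.neighborFinset z)) := by
  set L := commonNbrs H x y ∩ H.neighborFinset z with hL
  set M := -gram H bar (-R)
  have hκ : 0 < 2 * (2 * R + (2 * c + 1 - k)) := by
    have hk : (0 : ℝ) < k := by
      rw [← h.regular.degree_eq x]
      exact_mod_cast (degree_pos_iff_exists_adj ..).2 ⟨y, hxy⟩
    nlinarith
  have hM : M.PosSemidef := by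
    refine posSemidef_of_mul_self_eq_smul h.gram_isSymm.neg hκ ?_
    rw [neg_mul_neg, h.gram_mul_self (by linarith), smul_neg, ← neg_smul]
    congr 1
    ring
  have hLt : ∑ u ∈ L, ∑ w ∈ {x, y, z}, M u w = 3 * #L := by
    rw [mul_comm, ← nsmul_eq_mul]
    refine sum_eq_card_nsmul fun u hu => ?_
    simp only [hL, mem_inter, mem_neighborFinset] at hu
    rw [sum_insert (by simp [hxy.ne, hxz.ne]), sum_insert (by simp [hyz.ne]), sum_singleton]
    simp only [M, Matrix.neg_apply, h.gram_of_adj hu.1.1.symm, h.gram_of_adj hu.1.2.symm,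
      h.gram_of_adj hu.2.symm]
    norm_num
  have hLL : ∑ u ∈ L, ∑ w ∈ L, M u w = #L * (R + 1 - #L) := by
    rw [← nsmul_eq_mul]
    refine sum_eq_card_nsmul fun u hu => ?_
    simp only [M, Matrix.neg_apply, sum_neg_distrib]
    rw [h.sum_gram_of_mem hfree hxy hxz hyz hu]
    ring
  have htt : ∑ u ∈ {x, y, z}, ∑ w ∈ {x, y, z}, M u w = 3 * (R + 2) := by
    simp only [sum_insert (show x ∉ {y, z} by simp [hxy.ne, hxz.ne]),
      sum_insert (show y ∉ {z} by simp [hyz.ne]), sum_singleton, M, Matrix.neg_apply, gram_self,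
      h.gram_of_adj hxy, h.gram_of_adj hxz, h.gram_of_adj hyz, h.gram_of_adj hxy.symm,
      h.gram_of_adj hxz.symm, h.gram_of_adj hyz.symm]
    ring
  have hpos : (0 : ℝ) < #L := by exact_mod_cast hne.card_pos
  have hle := posSemidef_sq_sum_sum_le hM L {x, y, z}
  rw [hLt, hLL, htt] at hle
  nlinarith

end IsTaylorCover

lemma sum_card_inter_neighborFinset {V : Type*} [Fintype V] [DecidableEq V] (H : SimpleGraph V)
    [DecidableRel H.Adj] (s t : Finset V) :
    ∑ w ∈ s, #(t ∩ H.neighborFinset w) = ∑ u ∈ t, #(s ∩ H.neighborFinset u) := by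
  simp only [card_eq_sum_ones, ← filter_mem_eq_inter, mem_neighborFinset, sum_filter]
  rw [sum_comm]
  simp only [H.adj_comm]

namespace IsTaylorCover

variable {V : Type*} [Fintype V] [DecidableEq V] {H : SimpleGraph V} [DecidableRel H.Adj]
  {bar : V → V} {k c : ℕ} {x y z u w : V} {ρ : ℝ}

lemma sum_sq_sum_gram_univ (h : IsTaylorCover H bar k c)
    (hρ : ρ ^ 2 = (2 * c + 1 - k) * ρ + k) (s : Finset V) :
    ∑ w, (∑ u ∈ s, gram H bar ρ w u) ^ 2 =
      2 * (2 * ρ - (2 * c + 1 - k)) * ∑ w ∈ s, ∑ u ∈ s, gram H bar ρ w u := by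
  have hmul (u v : V) : ∑ w, gram H bar ρ w u * gram H bar ρ w v =
      2 * (2 * ρ - (2 * c + 1 - k)) * gram H bar ρ u v := by
    rw [← smul_eq_mul, ← Matrix.smul_apply, ← h.gram_mul_self hρ, Matrix.mul_apply]
    simp only [h.gram_isSymm.apply u]
  simp only [sq, sum_mul_sum]
  simp only [mul_sum, ← hmul]
  rw [sum_comm]
  exact sum_congr rfl fun u _ => sum_comm

lemma sum_sq_sum_gram_commonNbrs (h : IsTaylorCover H bar k c) (hfree : H.CliqueFree 5)
    (hxy : H.Adj x y) (hxz : H.Adj x z) (hyz : H.Adj y z) {l : ℕ}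
    (hl : #(commonNbrs H x y ∩ H.neighborFinset z) = l) :
    ∑ w ∈ commonNbrs H x y, (∑ u ∈ commonNbrs H x y ∩ H.neighborFinset z, gram H bar ρ w u) ^ 2 =
      4 * localFourWalks H x y z + c * l ^ 2 - 5 * l ^ 3 + l * (l + ρ - 1) ^ 2 := by
  set L := commonNbrs H x y ∩ H.neighborFinset z with hL
  have hterm (w) (hw : w ∈ commonNbrs H x y) : (∑ u ∈ L, gram H bar ρ w u) ^ 2 =
      4 * (#(L ∩ H.neighborFinset w) : ℝ) ^ 2 + l ^ 2 - 4 * l * #(L ∩ H.neighborFinset w) +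
        if w ∈ L then (l + ρ - 1) ^ 2 - (l : ℝ) ^ 2 else 0 := by
    have hbar : bar w ∉ L := by
      simp only [hL, mem_inter, mem_neighborFinset] at hw ⊢
      exact fun hw' => h.not_adj_bar_of_adj hw.1 hw'.1.1
    split_ifs with hwL
    · rw [h.sum_gram_of_mem hfree hxy hxz hyz hwL, hl,
        inter_neighborFinset_eq_empty_of_cliqueFree hfree hxy hxz hyz hwL, card_empty,
        Nat.cast_zero]
      ring
    · rw [h.sum_gram hbar, hl, if_neg hwL]
      ring
  have hdeg : ∑ w ∈ commonNbrs H x y, (#(L ∩ H.neighborFinset w) : ℝ) = l ^ 2 := by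
    rw [← Nat.cast_sum, sum_card_inter_neighborFinset, sum_const_nat (m := l), hl]
    · push_cast; ring
    · intro u hu
      simp only [hL, mem_inter, mem_neighborFinset] at hu
      have hu' := h.two_mul_card_add_eq hxy hu.1.1 hu.1.2
      have hz' := h.two_mul_card_add_eq hxy hxz hyz
      rw [← hL, hl] at hz'
      omega
  have hsub : commonNbrs H x y ∩ L = L := inter_eq_right.2 inter_subset_left
  rw [sum_congr rfl hterm, sum_add_distrib, sum_sub_distrib, sum_add_distrib, ← mul_sum, ← mul_sum,
    hdeg, sum_ite_mem, hsub, sum_const, sum_const, hl, h.card_common hxy, localFourWalks]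
  simp only [nsmul_eq_mul]
  push_cast
  ring

lemma localFourWalks_add_add (h : IsTaylorCover H bar k c) (hfree : H.CliqueFree 5)
    (hρ : ρ ^ 2 = (2 * c + 1 - k) * ρ + k) (hxy : H.Adj x y) (hxz : H.Adj x z) (hyz : H.Adj y z)
    {l : ℕ} (hl : #(commonNbrs H x y ∩ H.neighborFinset z) = l) :
    (4 * (localFourWalks H x y z + localFourWalks H x z y + localFourWalks H y z x) : ℝ) =
      (2 * ρ - (2 * c + 1 - k)) * l * (l + ρ - 1) - 3 * c * l ^ 2 + 15 * l ^ 3 -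
        l * (l + ρ - 1) ^ 2 := by
  have hL₁ : commonNbrs H x z ∩ H.neighborFinset y = commonNbrs H x y ∩ H.neighborFinset z :=
    inter_right_comm ..
  have hL₂ : commonNbrs H y z ∩ H.neighborFinset x = commonNbrs H x y ∩ H.neighborFinset z := by
    rw [inter_right_comm, inter_comm (H.neighborFinset y)]
  have hxyz := h.sum_sq_sum_gram_commonNbrs (ρ := ρ) hfree hxy hxz hyz hl
  have hxzy := h.sum_sq_sum_gram_commonNbrs (ρ := ρ) hfree hxz hxy hyz.symm (hL₁ ▸ hl)
  have hyzx := h.sum_sq_sum_gram_commonNbrs (ρ := ρ) hfree hyz hxy.symm hxz.symm (hL₂ ▸ hl)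
  have hrow (w) (hw : w ∈ commonNbrs H x y ∩ H.neighborFinset z) :
      ∑ u ∈ commonNbrs H x y ∩ H.neighborFinset z, gram H bar ρ w u = l + ρ - 1 := by
    rw [h.sum_gram_of_mem hfree hxy hxz hyz hw, hl]
  have huniv := h.sum_sq_sum_gram_univ hρ (commonNbrs H x y ∩ H.neighborFinset z)
  have htri := h.sum_univ_eq_of_triangle
    (F := fun w => (∑ u ∈ commonNbrs H x y ∩ H.neighborFinset z, gram H bar ρ w u) ^ 2)
    (fun w => by simp [← h.gram_isSymm.apply (bar w), ← h.gram_isSymm.apply w, h.gram_bar])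
    hxy hxz hyz
  rw [hL₁] at hxzy
  rw [hL₂] at hyzx
  rw [huniv, hxyz, hxzy, hyzx, sum_congr rfl hrow,
    sum_congr rfl fun w hw => congrArg (· ^ 2) (hrow w hw), sum_const, sum_const, hl, nsmul_eq_mul,
    nsmul_eq_mul] at htri
  linarith

lemma deflate_gram_apply (h : IsTaylorCover H bar k c) (hxy : H.Adj x y) :
    deflate (gram H bar ρ) x y y = ρ - 1 / ρ := by
  rw [deflate_apply, gram_self, gram_self, h.gram_of_adj hxy, h.gram_of_adj hxy.symm]
  norm_num

lemma submatrix_deflate_deflate_gram (h : IsTaylorCover H bar k c) (hρ : 1 < ρ)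
    (hxy : H.Adj x y) :
    (deflate (deflate (gram H bar ρ) x) y).submatrix Subtype.val Subtype.val =
      (ρ - 1) • (1 : Matrix ↥(commonNbrs H x y) ↥(commonNbrs H x y) ℝ) +
        (1 - 2 / (ρ - 1)) • Matrix.of (fun _ _ => 1) -
        (2 : ℝ) • (localGraph H x y).adjMatrix ℝ := by
  ext ⟨u, hu⟩ ⟨w, hw⟩
  simp only [mem_inter, mem_neighborFinset] at hu hw
  have hne : w ≠ bar u := h.ne_bar_of_adj hw.1 hu.1
  have hρ0 : ρ ≠ 0 := by positivity
  have hρ1 : ρ - 1 ≠ 0 := by linarith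
  have hρ1' : ρ ^ 2 - 1 ≠ 0 := by nlinarith
  simp only [Matrix.submatrix_apply, deflate_apply, gram_self, h.gram_of_adj hxy,
    h.gram_of_adj hxy.symm, h.gram_of_adj hw.1, h.gram_of_adj hw.2, h.gram_of_adj hu.1.symm,
    h.gram_of_adj hu.2.symm, Matrix.sub_apply, Matrix.add_apply, Matrix.smul_apply,
    Matrix.one_apply, Matrix.of_apply, adjMatrix_apply, comap_adj, smul_eq_mul,
    Subtype.mk.injEq, h.gram_of_ne_bar hne, mul_ite, mul_one, mul_zero]
  field_simp
  ring

lemma trace_sq_localGraph_nonneg (h : IsTaylorCover H bar k c) (hρ : 1 < ρ)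
    (hρsq : ρ ^ 2 = (2 * c + 1 - k) * ρ + k) (hxy : H.Adj x y)
    {R : Matrix ↥(commonNbrs H x y) ↥(commonNbrs H x y) ℝ} (hR : R.IsSymm) (a : ℝ) :
    0 ≤ ((R * ((ρ - 1) • 1 + (1 - 2 / (ρ - 1)) • Matrix.of (fun _ _ => 1) -
      (2 : ℝ) • (localGraph H x y).adjMatrix ℝ) + a • 1) ^ 2).trace +
        a ^ 2 * (ρ * (k + 1) / (2 * ρ - (2 * c + 1 - k)) - 2 - c) := by
  have hκ : 2 * (2 * ρ - (2 * c + 1 - k)) ≠ 0 := by nlinarith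
  have hx : gram H bar ρ x x ≠ 0 := by rw [gram_self]; positivity
  have hy : deflate (gram H bar ρ) x y y ≠ 0 := by
    rw [h.deflate_gram_apply hxy, sub_ne_zero, ne_eq, eq_div_iff (by positivity)]
    nlinarith
  have hκ₀ := right_ne_zero_of_mul hκ
  have hgram := h.gram_mul_self hρsq
  have hdefl := deflate_mul_self hgram hx
  have : Nonempty V := ⟨x⟩
  have hpos := trace_sq_add_nonneg_of_mul_self_eq_smul
    (isSymm_deflate (isSymm_deflate h.gram_isSymm x) y) hκ (deflate_mul_self hdefl hy)
    (Subtype.val : ↥(commonNbrs H x y) → V) hR a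
  rw [h.submatrix_deflate_deflate_gram hρ hxy, trace_deflate hdefl hy, trace_deflate hgram hx,
    trace_gram, h.card_eq, Fintype.card_coe, h.card_common hxy] at hpos
  convert hpos using 3
  generalize 2 * ρ - (2 * (c : ℝ) + 1 - k) = κ at hκ₀ ⊢
  push_cast
  field_simp
  ring

end IsTaylorCover

lemma quadratic_of_adjMatrix {V : Type*} [Fintype V] [DecidableEq V] {H : SimpleGraph V}
    [DecidableRel H.Adj] {l : ℕ} (hreg : H.IsRegularOfDegree l) (p q β γ : ℝ) :
    (p • 1 + q • Matrix.of (fun _ _ => 1) - (2 : ℝ) • H.adjMatrix ℝ + β • 1) *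
        (p • 1 + q • Matrix.of (fun _ _ => 1) - (2 : ℝ) • H.adjMatrix ℝ) + γ • 1 =
      (4 : ℝ) • H.adjMatrix ℝ ^ 2 - (4 * p + 2 * β) • H.adjMatrix ℝ +
        (p ^ 2 + β * p + γ) • (1 : Matrix V V ℝ) +
          (q * (q * Fintype.card V + 2 * p + β - 4 * l)) • Matrix.of fun _ _ => 1 := by
  have hAJ := adjMatrix_mul_of_one hreg
  have hJA : Matrix.of (fun _ _ => 1) * H.adjMatrix ℝ = (l : ℝ) • Matrix.of fun _ _ => 1 := by
    ext u w
    simp [mul_adjMatrix_apply, hreg.degree_eq]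
  have hJJ : (Matrix.of fun _ _ => 1) * (Matrix.of fun _ _ => 1 : Matrix V V ℝ) =
      (Fintype.card V : ℝ) • Matrix.of fun _ _ => 1 := by
    ext u w; simp [Matrix.mul_apply]
  generalize (Matrix.of fun _ _ => 1 : Matrix V V ℝ) = J at *
  simp only [mul_add, add_mul, mul_sub, sub_mul, Matrix.mul_smul, Matrix.smul_mul, hAJ, hJA, hJJ,
    one_mul, mul_one, sq (H.adjMatrix ℝ)]
  module

namespace IsTaylorCover

variable {V : Type*} [Fintype V] [DecidableEq V] {H : SimpleGraph V} [DecidableRel H.Adj]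
  {bar : V → V} {k c l : ℕ} {x y z : V} {ρ : ℝ}

lemma localGraph_isRegularOfDegree (h : IsTaylorCover H bar k c) (hxy : H.Adj x y)
    (hl : 2 * l + (k + 1) = 3 * c) : (localGraph H x y).IsRegularOfDegree l := by
  intro z
  have hz := z.2
  simp only [mem_inter, mem_neighborFinset] at hz
  have htri := h.two_mul_card_add_eq hxy hz.1 hz.2
  rw [degree_localGraph]
  omega

lemma exists_nat_mul_eq (h : IsTaylorCover H bar k c) [Nonempty V] (hρ : 0 < ρ)
    (hρsq : ρ ^ 2 = (2 * c + 1 - k) * ρ + k) :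
    ∃ g : ℕ, ρ * (k + 1) = (2 * ρ - (2 * c + 1 - k)) * g := by
  obtain ⟨g, hg⟩ := exists_nat_trace_eq (by nlinarith) (h.gram_mul_self hρsq)
  rw [trace_gram, h.card_eq] at hg
  push_cast at hg
  exact ⟨g, by linarith⟩

lemma le_five_of_eigenvalue_three (h : IsTaylorCover H bar k c) (hxy : H.Adj x y) {t : ℕ}
    (hk : k + 3 = 6 * t) (hc : c = 2 * t) : t ≤ 5 := by
  have hkt : (k : ℝ) = 6 * t - 3 := by rw [eq_sub_iff_add_eq]; exact_mod_cast hk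
  have hct : (c : ℝ) = 2 * t := by exact_mod_cast hc
  have hreg := h.localGraph_isRegularOfDegree (l := 1) hxy (by omega)
  -- `localGraph H x y` is a perfect matching on `2 * t` vertices, so the submatrix
  -- `2 - 2 * A` of the deflated Gram matrix has eigenvalue `4` with multiplicity `t`.
  have hpos := h.trace_sq_localGraph_nonneg (ρ := 3) (by norm_num) (by rw [hkt, hct]; ring) hxy
    (R := 1) Matrix.isSymm_one (-4)
  have hmat : (1 * ((3 - 1 : ℝ) • 1 + (1 - 2 / (3 - 1) : ℝ) • Matrix.of (fun _ _ => 1) -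
      (2 : ℝ) • (localGraph H x y).adjMatrix ℝ) + (-4 : ℝ) • 1) =
        (-2 : ℝ) • ((localGraph H x y).adjMatrix ℝ + 1) := by
    norm_num
    module
  have htrace : (((localGraph H x y).adjMatrix ℝ + 1) ^ 2).trace = (4 * t : ℝ) := by
    have hsq := trace_adjMatrix_sq hreg
    rw [sq] at hsq ⊢
    simp only [mul_add, add_mul, one_mul, mul_one, Matrix.trace_add, hsq, trace_adjMatrix,
      Matrix.trace_one, Fintype.card_coe, h.card_common hxy, hct]
    push_cast
    ring
  rw [hmat, smul_pow, Matrix.trace_smul, htrace, smul_eq_mul, hkt, hct] at hpos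
  have hden : (2 * 3 - (2 * (2 * t) + 1 - (6 * t - 3)) : ℝ) = 2 * (t + 1) := by ring
  have hdiv : (t + 2 : ℝ) ≤ 3 * (6 * t - 3 + 1) / (2 * (t + 1)) := by
    rw [hden] at hpos
    linarith
  rw [le_div_iff₀ (by positivity)] at hdiv
  by_contra! hlt
  have hlt' : (5 : ℝ) < t := by exact_mod_cast hlt
  nlinarith

lemma trace_quartic_localGraph_nonneg (h : IsTaylorCover H bar k c) (hfree : H.CliqueFree 5)
    (hk : k + 25 = 10 * l) (hc : c + 8 = 4 * l) (hl : 0 < l) (hxy : H.Adj x y) :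
    0 ≤ 16 * (((localGraph H x y).adjMatrix ℝ ^ 4).trace + (4 * l - 8) *
      (((l - 2) ^ 2 + l * (l - 8) / 2) * l + (l * (l - 8) / 4) ^ 2 -
        l * (l ^ 2 + (l - 2) * l + l * (l - 8) / 4) + l ^ 2 / 4 * (4 * l - 8))) +
      (l : ℝ) ^ 3 * (25 * l - 60 - l * (4 * l - 6)) := by
  have hkl : (k : ℝ) = 10 * l - 25 := by rw [eq_sub_iff_add_eq]; exact_mod_cast hk
  have hcl : (c : ℝ) = 4 * l - 8 := by rw [eq_sub_iff_add_eq]; exact_mod_cast hc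
  have hreg := h.localGraph_isRegularOfDegree (l := l) hxy (by omega)
  have hcard : (Fintype.card ↥(commonNbrs H x y) : ℝ) = 4 * l - 8 := by
    rw [Fintype.card_coe, h.card_common hxy, hcl]
  -- Any test polynomial gives a lower bound for the closed 4-walks; this one, namely
  -- `X ^ 2 - 2 * (l + 2) * X + l ^ 2`, makes it strong enough for all `l ≥ 6`.
  have hpos := h.trace_sq_localGraph_nonneg (ρ := 5) (by norm_num) (by rw [hkl, hcl]; ring) hxy
    (R := (5 - 1 : ℝ) • 1 + (1 - 2 / (5 - 1) : ℝ) • Matrix.of (fun _ _ => 1) -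
      (2 : ℝ) • (localGraph H x y).adjMatrix ℝ + (-2 * (l + 2) : ℝ) • 1)
    ((((Matrix.isSymm_one.smul _).add (Matrix.IsSymm.smul (A := Matrix.of fun _ _ => 1) rfl _)).sub
      ((isSymm_adjMatrix _).smul _)).add (Matrix.isSymm_one.smul _)) (l ^ 2)
  rw [quadratic_of_adjMatrix hreg, hcard] at hpos
  have hmat : (4 : ℝ) • (localGraph H x y).adjMatrix ℝ ^ 2 -
      (4 * (5 - 1) + 2 * (-2 * (l + 2)) : ℝ) • (localGraph H x y).adjMatrix ℝ +
      ((5 - 1) ^ 2 + -2 * (l + 2) * (5 - 1) + l ^ 2 : ℝ) • 1 +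
      ((1 - 2 / (5 - 1)) * ((1 - 2 / (5 - 1)) * (4 * l - 8) + 2 * (5 - 1) + -2 * (l + 2) - 4 * l) :
        ℝ) • Matrix.of (fun _ _ => 1) =
      (4 : ℝ) • ((localGraph H x y).adjMatrix ℝ ^ 2 + (l - 2 : ℝ) • (localGraph H x y).adjMatrix ℝ +
        (l * (l - 8) / 4 : ℝ) • 1 + (-(l / 2) : ℝ) • Matrix.of fun _ _ => 1) := by
    module
  have hfrac : (l ^ 2 : ℝ) ^ 2 * (5 * (10 * l - 25 + 1) /
      (2 * 5 - (2 * (4 * l - 8) + 1 - (10 * l - 25))) - 2 - (4 * l - 8)) =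
        l ^ 3 * (25 * l - 60 - l * (4 * l - 6)) := by
    rw [show (2 * 5 - (2 * (4 * l - 8) + 1 - (10 * l - 25)) : ℝ) = 2 * l by ring]
    field_simp
    ring
  rw [hmat, smul_pow, Matrix.trace_smul, trace_sq_quadratic_adjMatrix hreg
    (cliqueFree_localGraph hfree hxy), hcard, smul_eq_mul, hkl, hcl, hfrac] at hpos
  linarith

lemma lt_three_mul_sum_localFourWalks (h : IsTaylorCover H bar k c) (hfree : H.CliqueFree 5)
    (hk : k + 25 = 10 * l) (hc : c + 8 = 4 * l) (hl : 6 ≤ l) (hxy : H.Adj x y) :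
    (l * (l ^ 2 + 6 * l - 4) : ℝ) * #(commonNbrs H x y) <
      3 * ∑ z ∈ commonNbrs H x y, (localFourWalks H x y z : ℝ) := by
  have hpos := h.trace_quartic_localGraph_nonneg hfree hk hc (by omega) hxy
  have hcl : (c : ℝ) = 4 * l - 8 := by rw [eq_sub_iff_add_eq]; exact_mod_cast hc
  have hgap : (0 : ℝ) < l * (11 * l ^ 3 + 20 * l ^ 2 - 512 * l + 1024) := by
    obtain ⟨s, rfl⟩ := Nat.exists_eq_add_of_le hl
    push_cast
    ring_nf
    positivity
  rw [h.card_common hxy, hcl, sum_localFourWalks]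
  linarith

lemma not_cliqueFree_five_of_eigenvalue_five (h : IsTaylorCover H bar k c)
    (hk : k + 25 = 10 * l) (hc : c + 8 = 4 * l) (hl : 6 ≤ l) (hxy : H.Adj x y) :
    ¬ H.CliqueFree 5 := by
  intro hfree
  have hkl : (k : ℝ) = 10 * l - 25 := by rw [eq_sub_iff_add_eq]; exact_mod_cast hk
  have hcl : (c : ℝ) = 4 * l - 8 := by rw [eq_sub_iff_add_eq]; exact_mod_cast hc
  obtain ⟨x', y', hxy', hle⟩ := exists_adj_three_mul_sum_le
    (q := fun x y z => (localFourWalks H x y z : ℝ)) (K := l * (l ^ 2 + 6 * l - 4))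
    (fun x y z hxy hxz hyz => by
      have hl' : #(commonNbrs H x y ∩ H.neighborFinset z) = l := by
        have := h.two_mul_card_add_eq hxy hxz hyz
        omega
      have hsum := h.localFourWalks_add_add hfree (ρ := 5) (by rw [hkl, hcl]; ring) hxy hxz hyz hl'
      rw [hkl, hcl] at hsum
      linarith) ⟨x, y, hxy⟩
  exact (h.lt_three_mul_sum_localFourWalks hfree hk hc hl hxy').not_ge hle

lemma isSquare_discrim (h : IsTaylorCover H bar k c) [Nonempty V] (hk : 0 < k)
    (hne : k ≠ 2 * c + 1) : IsSquare ((2 * c + 1 - k : ℤ) ^ 2 + 4 * k) := by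
  set T : ℤ := 2 * c + 1 - k with hT
  have hT0 : T ≠ 0 := by omega
  have hTR : (T : ℝ) = 2 * c + 1 - k := by push_cast [hT]; ring
  have hΔ : 0 < T ^ 2 + 4 * k := by positivity
  set s : ℝ := √(T ^ 2 + 4 * k : ℤ) with hs
  have hs0 : 0 < s := Real.sqrt_pos.2 (by exact_mod_cast hΔ)
  have hsq : s ^ 2 = T ^ 2 + 4 * k := by
    rw [hs, Real.sq_sqrt (by exact_mod_cast hΔ.le)]; push_cast; rfl
  have hk' : (0 : ℝ) < k := by exact_mod_cast hk
  obtain ⟨g, hg⟩ := h.exists_nat_mul_eq (ρ := (T + s) / 2)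
    (by linarith [neg_lt_of_abs_lt (abs_lt_of_sq_lt_sq (by linarith : (T : ℝ) ^ 2 < s ^ 2) hs0.le)])
    (by rw [← hTR]; linear_combination hsq / 4)
  by_contra hsquare
  refine (irrational_sqrt_intCast_iff.2 ⟨hsquare, hΔ.le⟩).ne_rat
    (T * (k + 1) / (2 * g - (k + 1))) ?_
  have hlin : s * (2 * g - (k + 1)) = T * (k + 1) := by
    rw [← hTR] at hg; linear_combination -2 * hg
  have hne : (2 * g - (k + 1) : ℝ) ≠ 0 := by
    intro h0
    rw [h0, mul_zero] at hlin
    have : (T : ℝ) ≠ 0 := by exact_mod_cast hT0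
    have : (T * (k + 1) : ℝ) ≠ 0 := by positivity
    exact this hlin.symm
  rw [← hs]
  push_cast
  rw [eq_div_iff hne, hlin]

lemma exists_nat_eigenvalues (h : IsTaylorCover H bar k c) [Nonempty V] (hk : 0 < k)
    (hne : k ≠ 2 * c + 1) : ∃ ρ R : ℕ, k = ρ * R ∧ 2 * c + 1 + R = k + ρ := by
  obtain ⟨m, hm⟩ := h.isSquare_discrim hk hne
  wlog hm0 : 0 ≤ m generalizing m
  · exact this (-m) (by rw [hm]; ring) (by omega)
  obtain ⟨ρ, hρ⟩ : Even (m + (2 * c + 1 - k)) := by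
    have heven : Even (m * m - (2 * c + 1 - k) ^ 2) := by rw [← hm]; exact ⟨2 * k, by ring⟩
    simpa [Int.even_add, Int.even_sub, Int.even_mul, Int.even_pow] using heven
  have hprod : ρ * (m - ρ) = k := by
    rw [show (2 * c + 1 - k : ℤ) = 2 * ρ - m by omega] at hm
    linarith
  have hρ0 : 0 ≤ ρ := by
    by_contra! hneg
    nlinarith
  have hR0 : 0 ≤ m - ρ := by
    by_contra! hneg
    nlinarith
  lift ρ to ℕ using hρ0
  obtain ⟨R, hR⟩ := Int.eq_ofNat_of_zero_le hR0
  rw [hR] at hprod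
  exact ⟨ρ, R, by exact_mod_cast hprod.symm, by omega⟩

lemma lt_ten_of_eq_two_mul_add_one (h : IsTaylorCover H bar k c) (hfree : H.CliqueFree 5)
    (hxy : H.Adj x y) (hxz : H.Adj x z) (hyz : H.Adj y z) (hk : k = 2 * c + 1) : c < 10 := by
  by_contra! hc
  have hl := h.two_mul_card_add_eq hxy hxz hyz
  have hlR : (#(commonNbrs H x y ∩ H.neighborFinset z) : ℝ) = (k - 5) / 4 := by
    rw [eq_div_iff (by norm_num), eq_sub_iff_add_eq]
    exact_mod_cast (by omega : #(commonNbrs H x y ∩ H.neighborFinset z) * 4 + 5 = k)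
  have hkR : (k : ℝ) = 2 * c + 1 := by exact_mod_cast hk
  have hk21 : (21 : ℝ) ≤ k := by exact_mod_cast (by omega : 21 ≤ k)
  have hsq : √(k : ℝ) ^ 2 = k := Real.sq_sqrt k.cast_nonneg
  have hroot : 9 / 2 ≤ √(k : ℝ) := Real.le_sqrt_of_sq_le (by linarith)
  have hle := h.three_mul_card_le hfree hxy hxz hyz (card_pos.1 (by omega)) (by positivity)
    (R := √k) (by rw [hsq, hkR]; ring)
  rw [hlR] at hle
  generalize √(k : ℝ) = s at hsq hroot hle
  rw [← hsq] at hle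
  nlinarith [mul_nonneg (sq_nonneg s) (sub_nonneg.2 hroot)]

lemma exists_parameters (h : IsTaylorCover H bar k c) [Nonempty V] (hc : 0 < c) (hodd : Odd k)
    (hne : k ≠ 2 * c + 1) :
    ∃ r t : ℕ, 0 < r ∧ 0 < t ∧ k + 2 * r + 1 = 4 * r * t + 2 * t ∧ c = 2 * r * t := by
  obtain ⟨ρ, R, hk, hT⟩ := h.exists_nat_eigenvalues hodd.pos hne
  obtain ⟨⟨r, rfl⟩, ⟨s, rfl⟩⟩ := Nat.odd_mul.1 (hk ▸ hodd)
  have hcrs : c = 2 * r * (s + 1) := by nlinarith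
  refine ⟨r, s + 1, Nat.pos_of_ne_zero ?_, s.succ_pos, by rw [hk]; ring, hcrs⟩
  rintro rfl
  simp at hcrs
  omega

lemma le_two_of_parameters (h : IsTaylorCover H bar k c) (hfree : H.CliqueFree 5)
    (hxy : H.Adj x y) (hxz : H.Adj x z) (hyz : H.Adj y z) {r t : ℕ} (hr : 0 < r) (ht : 0 < t)
    (hk : k + 2 * r + 1 = 4 * r * t + 2 * t) (hc : c = 2 * r * t) :
    r = 1 ∨ r = 2 ∧ 4 ≤ t := by
  have hcard := h.two_mul_card_add_eq hxy hxz hyz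
  set l := #(commonNbrs H x y ∩ H.neighborFinset z) with hl
  have hlrt : l + t = r * t + r := by subst hc; linarith
  have hl0 : 0 < l := by nlinarith
  have hkR : (k + 2 * r + 1 : ℝ) = 4 * r * t + 2 * t := by exact_mod_cast hk
  have hcR : (c : ℝ) = 2 * r * t := by exact_mod_cast hc
  have ht1 : (1 : ℝ) ≤ t := by exact_mod_cast ht
  have hle := h.three_mul_card_le hfree hxy hxz hyz (card_pos.1 hl0) (R := 2 * t - 1)
    (by linarith) (by linear_combination (-2 * t : ℝ) * hkR + (4 * t - 2 : ℝ) * hcR)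
  rw [← hl] at hle
  by_cases hr3 : 3 ≤ r
  · have hlge : (2 * t + 3 : ℝ) ≤ l := by exact_mod_cast (by nlinarith : 2 * t + 3 ≤ l)
    nlinarith
  · obtain rfl | rfl : r = 1 ∨ r = 2 := by omega
    · exact .inl rfl
    · have hlt : (l : ℝ) = t + 2 := by exact_mod_cast (by omega : l = t + 2)
      rw [hlt] at hle
      exact .inr ⟨rfl, by exact_mod_cast (by nlinarith : (4 : ℝ) ≤ t)⟩

lemma parameters_of_ne (h : IsTaylorCover H bar k c) (hfree : H.CliqueFree 5)
    (hxy : H.Adj x y) (hxz : H.Adj x z) (hyz : H.Adj y z) (heven : 2 ∣ c) (hne : k ≠ 2 * c + 1) :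
    (k, c) ∈ ({(3, 2), (9, 4), (15, 6), (27, 10)} : Finset (ℕ × ℕ)) := by
  have : Nonempty V := ⟨x⟩
  have hl := h.two_mul_card_add_eq hxy hxz hyz
  have hc : 0 < c := by
    rw [← h.card_common hxy]
    exact card_pos.2 ⟨z, by simp [hxz, hyz]⟩
  obtain ⟨r, t, hr, ht, hk, hct⟩ := h.exists_parameters hc (by grind) hne
  obtain rfl | ⟨rfl, ht4⟩ := h.le_two_of_parameters hfree hxy hxz hyz hr ht hk hct
  · have ht5 := h.le_five_of_eigenvalue_three hxy (t := t) (by omega) (by omega)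
    have ht4 : t ≠ 4 := by
      rintro rfl
      have hρ : (3 : ℝ) ^ 2 = (2 * c + 1 - k) * 3 + k := by
        rw [show c = 8 by omega, show k = 21 by omega]; norm_num
      obtain ⟨g, hg⟩ := h.exists_nat_mul_eq (by norm_num) hρ
      rw [show c = 8 by omega, show k = 21 by omega] at hg
      have : (66 : ℝ) = 10 * g := by push_cast at hg; linarith
      have : 66 = 10 * g := by exact_mod_cast this
      omega
    obtain rfl : k = 6 * t - 3 := by omega
    subst hct
    interval_cases t <;> simp at ht4 ⊢
  · exact absurd hfree
      (h.not_cliqueFree_five_of_eigenvalue_five (l := t + 2) (by omega) (by omega) (by omega) hxy)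

lemma isNClique_insert_neighborFinset (h : IsTaylorCover H bar k c) (hk : k = c + 1) (x : V) :
    H.IsNClique (k + 1) (insert x (H.neighborFinset x)) := by
  refine IsNClique.insert ⟨fun y hy z hz hne => ?_, ?_⟩ (by simp)
  · simp only [coe_neighborFinset, mem_neighborSet] at hy hz
    by_contra hyz
    have hy' : y ∈ commonNbrs H x (bar z) := by
      rw [mem_inter, mem_neighborFinset, mem_neighborFinset, H.adj_comm (bar z)]
      exact ⟨hy, (h.adj_bar_iff hne.symm (h.ne_bar_of_adj hz hy)).2 hyz⟩
    have := card_pos.2 ⟨y, hy'⟩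
    have := h.card_commonNbrs_bar hz
    omega
  · rw [card_neighborFinset_eq_degree, h.regular.degree_eq]

theorem parameters (h : IsTaylorCover H bar k c) (hfree : H.CliqueFree 5) (hc : 0 < c)
    (hxy : H.Adj x y) :
    (k, c) ∈ ({(2, 1), (3, 2), (5, 2), (9, 4), (13, 6), (15, 6), (17, 8), (27, 10)} :
      Finset (ℕ × ℕ)) := by
  obtain ⟨z, hz⟩ : (commonNbrs H x y).Nonempty := card_pos.1 (h.card_common hxy ▸ hc)
  obtain ⟨hxz, hyz⟩ : H.Adj x z ∧ H.Adj y z := by simpa using hz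
  by_cases hclique : commonNbrs H x (bar y) = ∅
  · have hk := h.card_commonNbrs_bar hxy
    rw [hclique, card_empty, zero_add] at hk
    have hk4 : k < 4 := by
      by_contra! hk4
      exact hfree.mono (by omega) _ (h.isNClique_insert_neighborFinset hk.symm x)
    obtain rfl | rfl : c = 1 ∨ c = 2 := by omega
    all_goals simp [← hk]
  obtain ⟨w, hw⟩ := nonempty_iff_ne_empty.2 hclique
  simp only [mem_inter, mem_neighborFinset, h.bar_adj_iff] at hw
  have heven := h.two_dvd_of_adj_of_adj_bar hxy hw.1 hw.2
  by_cases hk : k = 2 * c + 1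
  · have := h.lt_ten_of_eq_two_mul_add_one hfree hxy hxz hyz hk
    interval_cases c <;> simp_all
  · have := h.parameters_of_ne hfree hxy hxz hyz heven hk
    simp only [mem_insert, mem_singleton] at this ⊢
    tauto

end IsTaylorCover

section Distance

variable {V : Type*} {G : SimpleGraph V} {x y : V} {i : ℕ}

/-- The graph joining the vertices at distance two in `G`. In a Taylor graph, two vertices that are
not antipodal to each other are adjacent either in `G` or in this graph. -/
def distTwoGraph (G : SimpleGraph V) : SimpleGraph V where
  Adj x y := G.dist x y = 2
  symm := ⟨fun _ _ h => G.dist_comm.trans h⟩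
  loopless := ⟨fun _ h => by simp at h⟩

@[simp] lemma distTwoGraph_adj : (distTwoGraph G).Adj x y ↔ G.dist x y = 2 := Iff.rfl

lemma exists_adj_dist_eq (hG : G.Connected) (hxy : G.dist x y = i + 1) :
    ∃ z, G.Adj y z ∧ G.dist x z = i := by
  obtain ⟨p, hp⟩ := hG.exists_walk_length_eq_dist y x
  rw [dist_comm, hxy] at hp
  cases p with
  | nil => simp at hp
  | @cons _ z _ hyz p =>
    rw [Walk.length_cons, add_left_inj] at hp
    have hzx : G.dist z x ≤ i := hp ▸ dist_le p
    have hle : G.dist x y ≤ G.dist x z + G.dist z y := hG.dist_triangle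
    rw [dist_eq_one_iff_adj.2 hyz.symm, hxy] at hle
    rw [dist_comm] at hzx
    exact ⟨z, hyz, by omega⟩

lemma exists_dist_eq_of_le (hG : G.Connected) (hi : i ≤ G.dist x y) : ∃ z, G.dist x z = i := by
  induction hi using Nat.decreasingInduction with
  | self => exact ⟨y, rfl⟩
  | of_succ j _ ih =>
    obtain ⟨w, hw⟩ := ih
    obtain ⟨z, -, hz⟩ := exists_adj_dist_eq hG hw
    exact ⟨z, hz⟩

end Distance

namespace IsDRG

variable {V : Type*} [Fintype V] {G : SimpleGraph V} {D i : ℕ} {b c : ℕ → ℕ} {x y z : V}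

lemma exists_dist_eq (h : IsDRG G D b c) (hi : i ≤ D) : ∃ x y, G.dist x y = i := by
  obtain ⟨x, y, hxy⟩ := h.2.1
  exact ⟨x, exists_dist_eq_of_le h.1 (hxy ▸ hi)⟩

lemma card_adj_dist_sub_one [DecidableRel G.Adj] (h : IsDRG G D b c) (hi : i ≤ D)
    (hxy : G.dist x y = i) : #{z | G.Adj y z ∧ G.dist x z = i - 1} = c i := by
  rw [← (h.2.2.2.2.2.2 i hi x y hxy).1, ← Set.ncard_coe_finset]
  simp

lemma card_adj_dist_add_one [DecidableRel G.Adj] (h : IsDRG G D b c) (hi : i ≤ D)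
    (hxy : G.dist x y = i) : #{z | G.Adj y z ∧ G.dist x z = i + 1} = b i := by
  rw [← (h.2.2.2.2.2.2 i hi x y hxy).2, ← Set.ncard_coe_finset]
  simp

lemma card_adj [DecidableRel G.Adj] (h : IsDRG G D b c) (x : V) : #{z | G.Adj x z} = b 0 := by
  rw [← h.card_adj_dist_add_one D.zero_le (dist_self (v := x))]
  simp [dist_eq_one_iff_adj]

lemma exists_adj_dist_eq_add_one (h : IsDRG G D b c) (hi : i ≤ D) (hxy : G.dist x y = i)
    (hb : 0 < b i) : ∃ z, G.dist x z = i + 1 := by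
  classical
  rw [← h.card_adj_dist_add_one hi hxy, card_pos] at hb
  obtain ⟨z, hz⟩ := hb
  exact ⟨z, (mem_filter_univ z).1 hz |>.2⟩

lemma c_pos (h : IsDRG G D b c) (hi : i + 1 ≤ D) : 0 < c (i + 1) := by
  classical
  obtain ⟨x, y, hxy⟩ := h.exists_dist_eq hi
  obtain ⟨z, hyz, hxz⟩ := exists_adj_dist_eq h.1 hxy
  rw [← h.card_adj_dist_sub_one hi hxy]
  exact card_pos.2 ⟨z, by simp [hyz, hxz]⟩

lemma card_dist_eq_two_mul (h : IsDRG G D b c) (hD : 2 ≤ D) (x : V) :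
    #{z | G.dist x z = 2} * c 2 = b 0 * b 1 := by
  classical
  rw [← h.card_adj x]
  refine (card_mul_eq_card_mul G.Adj (fun a ha => ?_) fun a ha => ?_).symm
  · have hxa : G.dist x a = 1 := dist_eq_one_iff_adj.2 ((mem_filter_univ a).1 ha)
    rw [← h.card_adj_dist_add_one (by omega) hxa, bipartiteAbove, filter_filter]
    simp only [and_comm, Nat.reduceAdd]
  · have hxa : G.dist x a = 2 := (mem_filter_univ a).1 ha
    rw [← h.card_adj_dist_sub_one hD hxa, bipartiteBelow, filter_filter]
    simp only [G.adj_comm a, Nat.reduceSub, dist_eq_one_iff_adj, and_comm]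

lemma card_dist_eq_two (h : IsDRG G D b c) (hD : 2 ≤ D) (hb1 : b 1 = c 2) (x : V) :
    #{z | G.dist x z = 2} = b 0 :=
  Nat.eq_of_mul_eq_mul_right (h.c_pos hD) (hb1 ▸ h.card_dist_eq_two_mul hD x)

lemma adj_iff_dist_eq_two (h : IsDRG G 3 b c) (hb1 : b 1 = c 2) (hc3 : c 3 = b 0)
    (hxy : G.dist x y = 3) : G.Adj y z ↔ G.dist x z = 2 := by
  classical
  let N : Finset V := {z | G.Adj y z}
  let S : Finset V := {z | G.dist x z = 2}
  have hcard : #(N ∩ S) = b 0 := by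
    rw [← filter_and]
    exact (h.card_adj_dist_sub_one le_rfl hxy).trans hc3
  have hN : N ∩ S = N := eq_of_subset_of_card_le inter_subset_left (by rw [hcard, h.card_adj])
  have hS : N ∩ S = S := eq_of_subset_of_card_le inter_subset_right
    (by rw [hcard, h.card_dist_eq_two (by omega) hb1])
  simpa [N, S] using Finset.ext_iff.1 (hN.symm.trans hS) z

lemma exists_dist_eq_three (h : IsDRG G 3 b c) (hb1 : b 1 = c 2) (hb2 : b 2 = 1)
    (hc3 : c 3 = b 0) (x : V) : ∃ y, G.dist x y = 3 := by
  obtain ⟨y, hxy⟩ := h.exists_adj_dist_eq_add_one (by omega) (dist_self (v := x))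
    (hc3 ▸ h.c_pos le_rfl)
  obtain ⟨z, hxz⟩ := h.exists_adj_dist_eq_add_one (by omega) hxy (hb1 ▸ h.c_pos (by omega))
  exact h.exists_adj_dist_eq_add_one (by omega) hxz (by omega)

lemma existsUnique_dist_eq_three (h : IsDRG G 3 b c) (hb1 : b 1 = c 2) (hb2 : b 2 = 1)
    (hc3 : c 3 = b 0) (x : V) : ∃! y, G.dist x y = 3 := by
  classical
  obtain ⟨y, hxy⟩ := h.exists_dist_eq_three hb1 hb2 hc3 x
  refine ⟨y, hxy, fun w hxw => ?_⟩
  obtain ⟨z, hwz, hxz⟩ := exists_adj_dist_eq h.1 hxw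
  have hyz : G.Adj y z := (h.adj_iff_dist_eq_two hb1 hc3 hxy).2 hxz
  have hcard := (h.card_adj_dist_add_one (by omega) hxz).trans hb2
  exact card_le_one.1 hcard.le _ (by simp [hwz.symm, hxw]) _ (by simp [hyz.symm, hxy])

lemma cliqueFree_distTwoGraph (h : IsDRG G 3 b c) (hb1 : b 1 = c 2) (hb2 : b 2 = 1)
    (hc3 : c 3 = b 0) {t : ℕ} (hclaw : ¬ HasClaw G t) : (distTwoGraph G).CliqueFree (t + 1) := by
  classical
  intro s hs
  obtain ⟨x, hx⟩ : s.Nonempty := card_pos.1 (by rw [hs.card_eq]; omega)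
  obtain ⟨y, hxy⟩ := h.exists_dist_eq_three hb1 hb2 hc3 x
  refine hclaw ⟨y, s.erase x, ?_, fun u hu => ?_, fun u hu w hw hne huw => ?_⟩
  · rw [card_erase_of_mem hx, hs.card_eq, Nat.add_sub_cancel]
  · rw [h.adj_iff_dist_eq_two hb1 hc3 hxy]
    exact hs.isClique hx (mem_of_mem_erase hu) (ne_of_mem_erase hu).symm
  · have huw₂ : G.dist u w = 2 := hs.isClique (mem_of_mem_erase hu) (mem_of_mem_erase hw) hne
    rw [dist_eq_one_iff_adj.2 huw] at huw₂
    omega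

variable [DecidableEq V] [DecidableRel (distTwoGraph G).Adj] {bar : V → V}

lemma isTaylorCover_distTwoGraph (h : IsDRG G 3 b c) (hb1 : b 1 = c 2) (hc3 : c 3 = b 0)
    (hbar : ∀ x y, G.dist x y = 3 ↔ y = bar x) :
    IsTaylorCover (distTwoGraph G) bar (b 0) (c 2) := by
  classical
  have hdist (x) : G.dist x (bar x) = 3 := (hbar x _).2 rfl
  have hadj {x z} : G.Adj (bar x) z ↔ G.dist x z = 2 := h.adj_iff_dist_eq_two hb1 hc3 (hdist x)
  have hinv (x) : bar (bar x) = x := ((hbar _ _).1 (dist_comm.trans (hdist x))).symm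
  refine ⟨hinv, fun x hx => ?_, fun x => ?_, fun {x y} hne hne' => ?_, fun x => ?_,
    fun {x y} hxy => ?_⟩
  · simpa [hx] using hdist x
  · simp [hdist]
  · have h₀ : G.dist x y ≠ 0 := fun e => hne (h.1.dist_eq_zero_iff.1 e).symm
    have h₃ : G.dist x y ≠ 3 := fun e => hne' ((hbar x y).1 e)
    have := h.2.2.1 x y
    rw [distTwoGraph_adj, dist_comm, ← hadj, hinv, G.adj_comm, ← dist_eq_one_iff_adj,
      distTwoGraph_adj]
    omega
  · rw [← card_neighborFinset_eq_degree, neighborFinset_eq_filter]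
    simpa only [distTwoGraph_adj] using h.card_dist_eq_two (by omega) hb1 x
  · have hyx : G.dist y (bar x) = 1 := dist_eq_one_iff_adj.2 (hadj.2 hxy).symm
    rw [← hb1, ← h.card_adj_dist_add_one (by omega) hyx]
    congr 1
    ext z
    simp [hadj]

end IsDRG

/-- Taylor graphs (diameter-3 DRGs with array `{k,c₂,1;1,c₂,k}`) without
4-claws. -/
theorem statement1 {V : Type*} [Fintype V] (G : SimpleGraph V) (b c : ℕ → ℕ)
    (hdrg : IsDRG G 3 b c) (hb1 : b 1 = c 2) (hb2 : b 2 = 1) (hc3 : c 3 = b 0)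
    (hclaw : ¬ HasClaw G 4) :
    arr3 b c 2 1 1 1 1 2 ∨
    arr3 b c 3 2 1 1 2 3 ∨
    arr3 b c 5 2 1 1 2 5 ∨
    arr3 b c 9 4 1 1 4 9 ∨
    arr3 b c 13 6 1 1 6 13 ∨
    arr3 b c 15 6 1 1 6 15 ∨
    arr3 b c 17 8 1 1 8 17 ∨
    arr3 b c 27 10 1 1 10 27 := by
  classical
  choose bar hdist hbar using hdrg.existsUnique_dist_eq_three hb1 hb2 hc3
  have hcover := hdrg.isTaylorCover_distTwoGraph hb1 hc3
    fun x y => ⟨hbar x y, fun hy => hy ▸ hdist x⟩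
  have hfree := hdrg.cliqueFree_distTwoGraph hb1 hb2 hc3 hclaw
  obtain ⟨x, y, hxy⟩ := hdrg.exists_dist_eq (i := 2) (by omega)
  have hparam := hcover.parameters hfree (hdrg.c_pos (by omega)) hxy
  have hc1 : c 1 = 1 := hdrg.2.2.2.2.1
  simp only [mem_insert, mem_singleton, Prod.mk.injEq] at hparam
  simp only [arr3, hb1, hb2, hc1, hc3]
  rcases hparam with h | h | h | h | h | h | h | h <;> simp [h]
end

section
/- Let Γ be a distance-regular graph with diameter D ≥ 2, valency k and intersection numbers a_1, c_2. If k > 2(a_1+1) and Γ contains an induced quadrangle, then k ≥ 3a_1 − 3c_2 + 7. -/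
/-!
Let `x, z₁, y, z₂` be an induced quadrangle. For a neighbour `z` of `x`, the closed neighbourhood
of `z` in the local graph `Γ(x)` has `a₁ + 1` elements. Since `k > 2(a₁ + 1)`, those of `z₁` and
`z₂` do not cover `Γ(x)`, so some `w ∈ Γ(x)` is nonadjacent to both, and `z₁, z₂, w` form a 3-claw
at `x`. Two nonadjacent members of `Γ(x)` have at most `c₂ - 1` common neighbours inside `Γ(x)`,
because `x` itself is one of their `c₂` common neighbours; for `z₁, z₂` the bound is `c₂ - 2`,
because `y` is a further common neighbour outside `Γ(x)`. Inclusion–exclusion on the three closed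
neighbourhoods gives `k ≥ 3(a₁ + 1) - 2(c₂ - 1) - (c₂ - 2)`.
-/

open SimpleGraph Finset

lemma card_add_card_add_card_le {α : Type*} [DecidableEq α] (A B C : Finset α) :
    #A + #B + #C ≤ #(A ∪ B ∪ C) + #(A ∩ B) + #(A ∩ C) + #(B ∩ C) := by
  have hAB := card_union_add_card_inter A B
  have hABC := card_union_add_card_inter (A ∪ B) C
  have hinter : #((A ∪ B) ∩ C) ≤ #(A ∩ C) + #(B ∩ C) := by
    rw [union_inter_distrib_right]
    exact card_union_le _ _
  omega

lemma dist_eq_two_iff {V : Type*} {G : SimpleGraph V} {u v : V} :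
    G.dist u v = 2 ↔ u ≠ v ∧ ¬ G.Adj u v ∧ (G.commonNeighbors u v).Nonempty := by
  rw [← edist_eq_two_iff, SimpleGraph.dist, ENat.toNat_eq_iff two_ne_zero, Nat.cast_ofNat]

/-- An amply regular graph with parameters `(k, l, m)`: every vertex has `k` neighbours, adjacent
vertices have `l` common neighbours, and vertices at distance two have `m` common neighbours. A
distance-regular graph is amply regular with `(k, l, m) = (k, a₁, c₂)`. The graph may be infinite
or disconnected. -/
structure IsAmplyRegular {V : Type*} [DecidableEq V] (G : SimpleGraph V) [G.LocallyFinite]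
    (k l m : ℕ) : Prop where
  regular : G.IsRegularOfDegree k
  of_adj : ∀ v w, G.Adj v w → #(G.neighborFinset v ∩ G.neighborFinset w) = l
  of_dist_eq_two : ∀ v w, G.dist v w = 2 → #(G.neighborFinset v ∩ G.neighborFinset w) = m

section LocalBall

variable {V : Type*} [DecidableEq V] {G : SimpleGraph V} [G.LocallyFinite] {k l m : ℕ}
  {x u v w y : V}

/-- For `z` adjacent to `x`, the closed neighbourhood of `z` in the local graph at `x`, that is, in
the subgraph induced on the neighbours of `x`. -/
def localBall (G : SimpleGraph V) [G.LocallyFinite] (x z : V) : Finset V :=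
  insert z (G.neighborFinset x ∩ G.neighborFinset z)

lemma mem_localBall : w ∈ localBall G x u ↔ w = u ∨ G.Adj x w ∧ G.Adj u w := by
  simp [localBall]

lemma localBall_subset_neighborFinset (hu : G.Adj x u) :
    localBall G x u ⊆ G.neighborFinset x :=
  insert_subset (by simpa using hu) inter_subset_left

lemma localBall_inter_localBall (hne : u ≠ v) (hadj : ¬ G.Adj u v) :
    localBall G x u ∩ localBall G x v =
      (G.neighborFinset u ∩ G.neighborFinset v) ∩ G.neighborFinset x := by
  ext w
  simp only [mem_inter, mem_localBall, mem_neighborFinset]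
  grind [G.adj_comm]

lemma dist_eq_two_of_notMem_localBall (hu : G.Adj x u) (hw : G.Adj x w)
    (h : w ∉ localBall G x u) : G.dist u w = 2 := by
  simp only [mem_localBall, hw, true_and, not_or] at h
  exact dist_eq_two_iff.2 ⟨Ne.symm h.1, h.2, x, hu.symm, hw.symm⟩

namespace IsAmplyRegular

lemma card_localBall (hG : IsAmplyRegular G k l m) (hu : G.Adj x u) :
    #(localBall G x u) = l + 1 := by
  rw [localBall, card_insert_of_notMem (by simp), hG.of_adj x u hu]

lemma exists_adj_notMem_localBall (hG : IsAmplyRegular G k l m) (hk : 2 * (l + 1) < k)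
    (hu : G.Adj x u) (hv : G.Adj x v) :
    ∃ w, G.Adj x w ∧ w ∉ localBall G x u ∧ w ∉ localBall G x v := by
  have hcard : #(localBall G x u ∪ localBall G x v) < #(G.neighborFinset x) :=
    calc #(localBall G x u ∪ localBall G x v)
      _ ≤ #(localBall G x u) + #(localBall G x v) := card_union_le _ _
      _ = 2 * (l + 1) := by rw [hG.card_localBall hu, hG.card_localBall hv, two_mul]
      _ < k := hk
      _ = #(G.neighborFinset x) := (hG.regular x).symm
  obtain ⟨w, hw, hw'⟩ := exists_mem_notMem_of_card_lt_card hcard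
  exact ⟨w, by simpa using hw, by simpa using hw'⟩

lemma card_localBall_inter_add_card_le (hG : IsAmplyRegular G k l m) (huv : G.dist u v = 2)
    {T : Finset V} (hT : T ⊆ (G.neighborFinset u ∩ G.neighborFinset v) \ G.neighborFinset x) :
    #(localBall G x u ∩ localBall G x v) + #T ≤ m := by
  obtain ⟨hne, hadj, -⟩ := dist_eq_two_iff.1 huv
  rw [localBall_inter_localBall hne hadj, ← hG.of_dist_eq_two u v huv,
    ← card_inter_add_card_sdiff (G.neighborFinset u ∩ G.neighborFinset v) (G.neighborFinset x)]
  gcongr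

lemma card_localBall_inter_add_one_le (hG : IsAmplyRegular G k l m) (hu : G.Adj x u)
    (hv : G.Adj x v) (huv : G.dist u v = 2) :
    #(localBall G x u ∩ localBall G x v) + 1 ≤ m := by
  refine hG.card_localBall_inter_add_card_le huv (T := {x}) ?_
  simp [hu.symm, hv.symm]

lemma card_localBall_inter_add_two_le (hG : IsAmplyRegular G k l m) (hu : G.Adj x u)
    (hv : G.Adj x v) (huv : G.dist u v = 2) (hyu : G.Adj y u) (hyv : G.Adj y v)
    (hxy : G.dist x y = 2) :
    #(localBall G x u ∩ localBall G x v) + 2 ≤ m := by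
  obtain ⟨hne, hadj, -⟩ := dist_eq_two_iff.1 hxy
  rw [← card_pair hne]
  refine hG.card_localBall_inter_add_card_le huv ?_
  simp [insert_subset_iff, hu.symm, hv.symm, hyu.symm, hyv.symm, hadj]

end IsAmplyRegular

end LocalBall

namespace IsDRG

variable {V : Type*} [Fintype V] {G : SimpleGraph V} [DecidableRel G.Adj] {D : ℕ} {b c : ℕ → ℕ}
  {x y : V}

lemma card_filter_dist_add_one_eq (h : IsDRG G D b c) (x y : V) :
    #{z ∈ G.neighborFinset y | G.dist x z + 1 = G.dist x y} = c (G.dist x y) := by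
  obtain ⟨-, -, hD, hc₀, -, -, h⟩ := h
  obtain h₀ | h₀ := (G.dist x y).eq_zero_or_pos
  · simp [h₀, hc₀]
  · rw [← (h _ (hD x y) x y rfl).1, ← Set.ncard_coe_finset]
    congr 1
    ext z
    simp [eq_tsub_iff_add_eq_of_le (Nat.one_le_of_lt h₀)]

lemma card_filter_dist_eq_add_one (h : IsDRG G D b c) (x y : V) :
    #{z ∈ G.neighborFinset y | G.dist x z = G.dist x y + 1} = b (G.dist x y) := by
  obtain ⟨-, -, hD, -, -, -, h⟩ := h
  rw [← (h _ (hD x y) x y rfl).2, ← Set.ncard_coe_finset]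
  congr 1
  ext z
  simp

lemma isRegularOfDegree (h : IsDRG G D b c) : G.IsRegularOfDegree (b 0) := fun x => by
  have hsphere : {z ∈ G.neighborFinset x | G.dist x z = G.dist x x + 1} = G.neighborFinset x :=
    filter_true_of_mem fun z hz => by simpa using hz
  rw [← card_neighborFinset_eq_degree, ← hsphere, h.card_filter_dist_eq_add_one, dist_self]

lemma card_filter_dist_eq_add_add (h : IsDRG G D b c) (x y : V) :
    #{z ∈ G.neighborFinset y | G.dist x z = G.dist x y} + b (G.dist x y) + c (G.dist x y) =
      b 0 := by
  classical
  have hcover : {z ∈ G.neighborFinset y | (G.dist x z = G.dist x y ∨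
      G.dist x z = G.dist x y + 1) ∨ G.dist x z + 1 = G.dist x y} = G.neighborFinset y := by
    refine filter_true_of_mem fun z hz => ?_
    have hdist := ((mem_neighborFinset G y z).1 hz).diff_dist_adj (u := x)
    omega
  have hdisj : Disjoint {z ∈ G.neighborFinset y | G.dist x z = G.dist x y}
      {z ∈ G.neighborFinset y | G.dist x z = G.dist x y + 1} :=
    disjoint_filter.2 fun z _ => by omega
  have hdisj' : Disjoint {z ∈ G.neighborFinset y | G.dist x z = G.dist x y ∨
      G.dist x z = G.dist x y + 1} {z ∈ G.neighborFinset y | G.dist x z + 1 = G.dist x y} :=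
    disjoint_filter.2 fun z _ => by omega
  have hcard := congrArg card hcover
  rwa [filter_or, card_union_of_disjoint hdisj', filter_or, card_union_of_disjoint hdisj,
    h.card_filter_dist_eq_add_one, h.card_filter_dist_add_one_eq, card_neighborFinset_eq_degree,
    h.isRegularOfDegree y] at hcard

variable [DecidableEq V]

lemma card_inter_neighborFinset_of_adj (h : IsDRG G D b c) (hxy : G.Adj x y) :
    #(G.neighborFinset x ∩ G.neighborFinset y) + b 1 + c 1 = b 0 := by
  have hinter : {z ∈ G.neighborFinset y | G.dist x z = 1} =
      G.neighborFinset x ∩ G.neighborFinset y := by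
    ext z
    simp [and_comm]
  have hsum := h.card_filter_dist_eq_add_add x y
  rwa [dist_eq_one_iff_adj.2 hxy, hinter] at hsum

lemma card_inter_neighborFinset_of_dist_eq_two (h : IsDRG G D b c) (hxy : G.dist x y = 2) :
    #(G.neighborFinset x ∩ G.neighborFinset y) = c 2 := by
  have hinter : {z ∈ G.neighborFinset y | G.dist x z + 1 = 2} =
      G.neighborFinset x ∩ G.neighborFinset y := by
    ext z
    simp [and_comm]
  rw [← hinter, ← hxy, h.card_filter_dist_add_one_eq]

/-- The subtraction can only truncate when `G` has no edges, and then `of_adj` is vacuous. -/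
lemma isAmplyRegular (h : IsDRG G D b c) : IsAmplyRegular G (b 0) (b 0 - b 1 - c 1) (c 2) where
  regular := h.isRegularOfDegree
  of_adj _ _ hvw := by
    have := h.card_inter_neighborFinset_of_adj hvw
    omega
  of_dist_eq_two _ _ := h.card_inter_neighborFinset_of_dist_eq_two

end IsDRG

theorem statement2_general {V : Type*} [DecidableEq V] {G : SimpleGraph V} [G.LocallyFinite]
    {k l m : ℕ} (hG : IsAmplyRegular G k l m) (hk : 2 * (l + 1) < k) (hquad : HasQuadrangle G) :
    3 * l + 7 ≤ k + 3 * m := by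
  obtain ⟨x, z₁, y, z₂, hxy, hz, hxz₁, hz₁y, hyz₂, hz₂x⟩ := hquad
  have hxz₂ := hz₂x.symm
  obtain ⟨w, hxw, hw₁, hw₂⟩ := hG.exists_adj_notMem_localBall hk hxz₁ hxz₂
  have hcover : #(localBall G x z₁ ∪ localBall G x z₂ ∪ localBall G x w) ≤ k := by
    rw [← hG.regular x]
    exact card_le_card <| union_subset (union_subset (localBall_subset_neighborFinset hxz₁)
      (localBall_subset_neighborFinset hxz₂)) (localBall_subset_neighborFinset hxw)
  have hz₁z₂ := hG.card_localBall_inter_add_two_le hxz₁ hxz₂ hz hz₁y.symm hyz₂ hxy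
  have hz₁w := hG.card_localBall_inter_add_one_le hxz₁ hxw
    (dist_eq_two_of_notMem_localBall hxz₁ hxw hw₁)
  have hz₂w := hG.card_localBall_inter_add_one_le hxz₂ hxw
    (dist_eq_two_of_notMem_localBall hxz₂ hxw hw₂)
  have hsum := card_add_card_add_card_le (localBall G x z₁) (localBall G x z₂) (localBall G x w)
  rw [hG.card_localBall hxz₁, hG.card_localBall hxz₂, hG.card_localBall hxw] at hsum
  omega

/-- if `k > 2(a₁+1)` and `Γ` contains an induced quadrangle, then
`k ≥ 3a₁ - 3c₂ + 7` (here `a₁ = k - b₁ - c₁`). -/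
theorem statement2 {V : Type*} [Fintype V] (G : SimpleGraph V) (D : ℕ) (b c : ℕ → ℕ)
    (hdrg : IsDRG G D b c) (hD : 2 ≤ D)
    (hk : 2 * (((b 0 : ℤ) - b 1 - c 1) + 1) < (b 0 : ℤ))
    (hquad : HasQuadrangle G) :
    3 * ((b 0 : ℤ) - b 1 - c 1) - 3 * (c 2 : ℤ) + 7 ≤ (b 0 : ℤ) := by
  classical
  have ⟨x, z₁, _, _, _, _, hxz₁, _⟩ := hquad
  have ha₁ := hdrg.card_inter_neighborFinset_of_adj hxz₁
  have hbound := statement2_general hdrg.isAmplyRegular (by omega) hquad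
  omega
end

section
/- Let Γ be a distance-regular graph with diameter D ≥ 2, valency k and intersection number a_1, and suppose Γ contains a 3-claw but no 4-claws. Then Γ contains a clique with at least k − 1 − 2a_1 + μ_min vertices, where μ_min is the minimum of |Γ_1(x) ∩ Γ_1(y) ∩ Γ_1(z)| over all vertices x and all pairs of neighbors y, z of x with dist(y,z) = 2. -/
/-!
Let `y`, `z` be neighbours of `x` at distance 2. Two nonadjacent neighbours of `x`, both outside
`{y, z}` and nonadjacent to `y` and `z`, would complete a 4-claw centred at `x`; so all such
neighbours of `x`, together with `x` itself, form a clique. The other neighbours of `x` are `y`,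
`z` and the vertices of `Γ₁(x) ∩ Γ₁(y)` and `Γ₁(x) ∩ Γ₁(z)`; these two sets have size `a₁` in a
distance-regular graph, and inclusion-exclusion counts their union.
-/

open SimpleGraph Finset

section Claw

variable {V : Type*} {G : SimpleGraph V} {x : V}

/-- The vertices that extend a claw with centre `x` and set of leaves `A`: the neighbours of `x`
outside `A` that are adjacent to no vertex of `A`. -/
def clawExtensions (G : SimpleGraph V) (x : V) (A : Set V) : Set V :=
  {w | G.Adj x w ∧ w ∉ A ∧ ∀ a ∈ A, ¬ G.Adj a w}

lemma isClique_insert_clawExtensions {t : ℕ} {A : Finset V} (hclaw : ¬ HasClaw G (t + 2))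
    (hcard : #A = t) (hadj : ∀ a ∈ A, G.Adj x a) (hindep : G.IsIndepSet (A : Set V)) :
    G.IsClique (insert x (clawExtensions G x A)) := by
  classical
  refine isClique_insert.2 ⟨fun v hv w hw hvw => ?_, fun w hw _ => hw.1⟩
  obtain ⟨hxv, hvA, hv⟩ := hv
  obtain ⟨hxw, hwA, hw⟩ := hw
  by_contra hnadj
  have hvwA : v ∉ insert w A := by simp only [mem_insert, not_or]; exact ⟨hvw, hvA⟩
  have hsymm : Std.Symm fun u u' => ¬ G.Adj u u' := ⟨fun _ _ h h' => h h'.symm⟩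
  refine hclaw ⟨x, insert v (insert w A), ?_, ?_, ?_⟩
  · rw [card_insert_of_notMem hvwA, card_insert_of_notMem hwA, hcard]
  · simpa only [forall_mem_insert] using ⟨hxv, hxw, hadj⟩
  · rw [coe_insert, coe_insert]
    refine Set.Pairwise.insert_of_symm
      (Set.Pairwise.insert_of_symm hindep fun a ha _ h => hw a ha h.symm) ?_
    rintro u (rfl | hu) _
    exacts [hnadj, fun h => hv u hu h.symm]

lemma finite_clawExtensions (hfin : (G.neighborSet x).Finite) (A : Set V) :
    (clawExtensions G x A).Finite :=
  hfin.subset fun _ hw => hw.1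

lemma ncard_neighborSet_eq_add_ncard_clawExtensions {A : Set V} (hfin : (G.neighborSet x).Finite)
    (hA : A ⊆ G.neighborSet x) (hindep : G.IsIndepSet A) :
    (G.neighborSet x).ncard =
      (⋃ a ∈ A, G.commonNeighbors x a).ncard + A.ncard + (clawExtensions G x A).ncard := by
  have hU : ⋃ a ∈ A, G.commonNeighbors x a ⊆ G.neighborSet x :=
    Set.iUnion₂_subset fun a _ => G.commonNeighbors_subset_neighborSet_left x a
  have hdisjA : Disjoint (⋃ a ∈ A, G.commonNeighbors x a) A := by
    refine Set.disjoint_left.2 fun w hwU hwA => ?_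
    obtain ⟨a, ha, -, haw⟩ := Set.mem_iUnion₂.1 hwU
    exact hindep ha hwA haw.ne haw
  have hdisjE : Disjoint ((⋃ a ∈ A, G.commonNeighbors x a) ∪ A) (clawExtensions G x A) := by
    refine Set.disjoint_left.2 ?_
    rintro w (hwU | hwA) ⟨-, hwA', hw⟩
    · obtain ⟨a, ha, -, haw⟩ := Set.mem_iUnion₂.1 hwU
      exact hw a ha haw
    · exact hwA' hwA
  have hpartition :
      G.neighborSet x = (⋃ a ∈ A, G.commonNeighbors x a) ∪ A ∪ clawExtensions G x A := by
    refine Set.Subset.antisymm (fun w hw => ?_)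
      (Set.union_subset (Set.union_subset hU hA) fun w hw => hw.1)
    by_cases hwU : w ∈ ⋃ a ∈ A, G.commonNeighbors x a
    · exact .inl (.inl hwU)
    by_cases hwA : w ∈ A
    · exact .inl (.inr hwA)
    exact .inr ⟨hw, hwA, fun a ha haw => hwU (Set.mem_biUnion ha ⟨hw, haw⟩)⟩
  conv_lhs => rw [hpartition]
  rw [Set.ncard_union_eq hdisjE ((hfin.subset hU).union (hfin.subset hA))
    (finite_clawExtensions hfin A), Set.ncard_union_eq hdisjA (hfin.subset hU) (hfin.subset hA)]

theorem statement5_general {y z : V} (hfin : (G.neighborSet x).Finite) (hclaw : ¬ HasClaw G 4)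
    (hxy : G.Adj x y) (hxz : G.Adj x z) (hyz : G.dist y z = 2) :
    ∃ s : Finset V, G.IsClique (s : Set V) ∧
      ((G.neighborSet x).ncard : ℤ) - 1 -
        ((G.commonNeighbors x y).ncard + (G.commonNeighbors x z).ncard) +
        {w : V | G.Adj x w ∧ G.Adj y w ∧ G.Adj z w}.ncard ≤ #s := by
  classical
  have hne : y ≠ z := by rintro rfl; simp at hyz
  have hnadj : ¬ G.Adj y z := fun h => by simp [dist_eq_one_iff_adj.2 h] at hyz
  have hadj : ∀ a ∈ ({y, z} : Finset V), G.Adj x a := by simp [hxy, hxz]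
  have hindep : G.IsIndepSet (({y, z} : Finset V) : Set V) := by
    simp [Set.pairwise_pair, hnadj, G.adj_comm z y]
  have hclique := isClique_insert_clawExtensions hclaw (card_pair hne) hadj hindep
  have hdegree := ncard_neighborSet_eq_add_ncard_clawExtensions hfin hadj hindep
  have hinterEq : G.commonNeighbors x y ∩ G.commonNeighbors x z =
      {w : V | G.Adj x w ∧ G.Adj y w ∧ G.Adj z w} := by
    ext w
    simp only [Set.mem_inter_iff, mem_commonNeighbors, Set.mem_ofPred_eq]
    tauto
  have hinclExcl := Set.ncard_union_add_ncard_inter (G.commonNeighbors x y)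
    (G.commonNeighbors x z)
    (hfin.subset (G.commonNeighbors_subset_neighborSet_left x y))
    (hfin.subset (G.commonNeighbors_subset_neighborSet_left x z))
  have hext := finite_clawExtensions hfin (({y, z} : Finset V) : Set V)
  refine ⟨(hext.insert x).toFinset, by rwa [Set.Finite.coe_toFinset], ?_⟩
  rw [← Set.ncard_eq_toFinset_card _ (hext.insert x),
    Set.ncard_insert_of_notMem (fun h => G.irrefl h.1) hext]
  rw [coe_pair, Set.biUnion_pair, Set.ncard_pair hne] at hdegree
  rw [hinterEq] at hinclExcl
  rw [coe_pair]
  omega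

end Claw

namespace IsDRG

variable {V : Type*} [Fintype V] {G : SimpleGraph V} {D : ℕ} {b c : ℕ → ℕ}

lemma ncard_neighborSet (h : IsDRG G D b c) (x : V) : (G.neighborSet x).ncard = b 0 := by
  obtain ⟨-, -, -, -, -, -, hcount⟩ := h
  rw [← (hcount 0 D.zero_le x x G.dist_self).2]
  congr 1
  ext w
  simp [dist_eq_one_iff_adj]

lemma ncard_adj_dist_eq (h : IsDRG G D b c) (x y : V) :
    ({z | G.Adj y z ∧ G.dist x z = G.dist x y}.ncard : ℤ) =
      b 0 - b (G.dist x y) - c (G.dist x y) := by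
  have hk := h.ncard_neighborSet y
  obtain ⟨hconn, -, hdist, -, -, -, hcount⟩ := h
  obtain ⟨hc, hb⟩ := hcount _ (hdist x y) x y rfl
  have hpartition : G.neighborSet y =
      {z | G.Adj y z ∧ G.dist x z = G.dist x y} ∪ {z | G.Adj y z ∧ G.dist x z = G.dist x y - 1} ∪
        {z | G.Adj y z ∧ G.dist x z = G.dist x y + 1} := by
    ext z
    have hdist_xz (hyz : G.Adj y z) := hyz.diff_dist_adj (u := x)
    simp only [mem_neighborSet, Set.mem_union, Set.mem_ofPred_eq]
    tauto
  have hdisj : Disjoint {z | G.Adj y z ∧ G.dist x z = G.dist x y}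
      {z | G.Adj y z ∧ G.dist x z = G.dist x y - 1} := by
    refine Set.disjoint_left.2 fun z ⟨hyz, hz⟩ ⟨_, hz'⟩ => ?_
    -- The two distances agree only if `dist x y = 0`, by truncation of `0 - 1`.
    have hxz : x = z := hconn.dist_eq_zero_iff.1 (by omega)
    have hxy : x = y := hconn.dist_eq_zero_iff.1 (by omega)
    exact hyz.ne (hxy.symm.trans hxz)
  have hdisj_succ : Disjoint
      ({z | G.Adj y z ∧ G.dist x z = G.dist x y} ∪ {z | G.Adj y z ∧ G.dist x z = G.dist x y - 1})
      {z | G.Adj y z ∧ G.dist x z = G.dist x y + 1} := by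
    refine Set.disjoint_left.2 ?_
    rintro z (⟨-, hz⟩ | ⟨-, hz⟩) ⟨-, hz'⟩ <;> omega
  rw [hpartition, Set.ncard_union_eq hdisj_succ, Set.ncard_union_eq hdisj, hc, hb] at hk
  omega

lemma ncard_commonNeighbors (h : IsDRG G D b c) {x y : V} (hxy : G.Adj x y) :
    ((G.commonNeighbors x y).ncard : ℤ) = b 0 - b 1 - c 1 := by
  have heq : G.commonNeighbors x y = {z | G.Adj y z ∧ G.dist x z = 1} := by
    ext z
    simp only [mem_commonNeighbors, Set.mem_ofPred_eq, dist_eq_one_iff_adj, and_comm]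
  have hdist : G.dist x y = 1 := dist_eq_one_iff_adj.2 hxy
  rw [heq]
  simpa only [hdist] using h.ncard_adj_dist_eq x y

end IsDRG

/-- a DRG with a 3-claw but no 4-claws contains a clique with at least
`k - 1 - 2a₁ + μ_min` vertices, where `μ_min` is the minimal number of common neighbours of
`x`, `y`, `z` over all vertices `x` and pairs of neighbours `y, z` of `x` at distance 2. -/
theorem statement5 {V : Type*} [Fintype V] (G : SimpleGraph V) (D : ℕ) (b c : ℕ → ℕ)
    (μ : ℕ) (hdrg : IsDRG G D b c) (hD : 2 ≤ D)
    (hclaw3 : HasClaw G 3) (hclaw4 : ¬ HasClaw G 4)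
    (hμlb : ∀ x y z : V, G.Adj x y → G.Adj x z → G.dist y z = 2 →
      μ ≤ {w : V | G.Adj x w ∧ G.Adj y w ∧ G.Adj z w}.ncard)
    (hμatt : ∃ x y z : V, G.Adj x y ∧ G.Adj x z ∧ G.dist y z = 2 ∧
      {w : V | G.Adj x w ∧ G.Adj y w ∧ G.Adj z w}.ncard = μ) :
    ∃ s : Finset V, G.IsClique (s : Set V) ∧
      (b 0 : ℤ) - 1 - 2 * ((b 0 : ℤ) - b 1 - c 1) + (μ : ℤ) ≤ (s.card : ℤ) := by
  obtain ⟨x, y, z, hxy, hxz, hyz, rfl⟩ := hμatt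
  simpa only [hdrg.ncard_neighborSet, hdrg.ncard_commonNeighbors hxy,
    hdrg.ncard_commonNeighbors hxz, ← two_mul]
    using statement5_general (Set.toFinite _) hclaw4 hxy hxz hyz
end

section
/- Let Γ be a distance-regular graph with diameter D ≥ 3 and valency k satisfying 3 ≤ k < 3(a_1+1), and suppose Γ contains a 3-claw but no 4-claws. Then Γ contains an induced quadrangle; in particular c_2 ≥ 2. -/
/-!
The leaves `y` of a claw with centre `x` give three sets `N(x) ∩ N[y]` of size `a₁ + 1` inside
`N(x)`; as `k < 3 (a₁ + 1)`, two of them meet, so `c₂ ≥ 2`. Suppose there is no induced quadrangle.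
Then the graph induced on `N(x)` is coedge-regular: it is regular of valency `a₁`, and any two
non-adjacent vertices have exactly `μ = c₂ - 1 > 0` common neighbours. It contains three pairwise
non-adjacent vertices, but not four. Such a graph without quadrangles does not exist, by induction
on `μ`.

The key point is that, for a fixed vertex `p`, the size of `N[p] \ N[y]` is the same for all
neighbours `y` of `p` that are not twins of `p`, that is, for which `N[y] ≠ N[p]`. Hence deleting
from `N[p]` the class of twins of `p` leaves a graph that is again coedge-regular. If `p` is the
centre of a `3`-claw, then this graph contains the leaves of the claw and has a smaller, but still
positive, `μ`.

If there are no `3`-claws, all nonempty sets `N[p] \ N[y]` with `y ∈ N[p]` have the same size `e`,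
there are `6 e` vertices, and every twin class has the same size `α`. Counting the edges between
`N[y]` and its complement gives `α e = (2 e - μ) (e - μ)`, which contradicts `α ∣ e` and `α ∣ μ`.
-/

open SimpleGraph Finset

/-- The closed neighbourhood of `v`: the vertex `v` together with its neighbours. Two vertices are
distinct and non-adjacent exactly when neither lies in the closed neighbourhood of the other, which
is how non-adjacency is expressed throughout. -/
def closedNbhd {V : Type*} (G : SimpleGraph V) [G.LocallyFinite] (v : V) : Finset V :=
  (G.neighborFinset v).cons v (G.notMem_neighborFinset_self v)

/-- A graph is coedge-regular with parameters `(k, μ)` if it is regular of valency `k` and any two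
distinct non-adjacent vertices have exactly `μ` common neighbours. -/
structure IsCoedgeRegular {V : Type*} (G : SimpleGraph V) [G.LocallyFinite] (k μ : ℕ) : Prop where
  isRegularOfDegree : G.IsRegularOfDegree k
  ncard_commonNeighbors : ∀ ⦃v w⦄, v ≠ w → ¬ G.Adj v w → (G.commonNeighbors v w).ncard = μ

/-- A graph is amply regular with parameters `(k, l, μ)` if it is regular of valency `k`, adjacent
vertices have exactly `l` common neighbours, and vertices at distance two have exactly `μ`. -/
structure IsAmplyRegular_s6 {V : Type*} (G : SimpleGraph V) [G.LocallyFinite] (k l μ : ℕ) :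
    Prop where
  isRegularOfDegree : G.IsRegularOfDegree k
  ncard_commonNeighbors_of_adj : ∀ ⦃v w⦄, G.Adj v w → (G.commonNeighbors v w).ncard = l
  ncard_commonNeighbors_of_dist : ∀ ⦃v w⦄, G.dist v w = 2 → (G.commonNeighbors v w).ncard = μ

/-- The twins of `p`: the vertices with the same closed neighbourhood as `p`, including `p`. -/
def twinClass {V : Type*} (G : SimpleGraph V) [G.LocallyFinite] [DecidableEq V] (p : V) :
    Finset V :=
  {w ∈ closedNbhd G p | closedNbhd G w = closedNbhd G p}

theorem card_eq_card_of_forall_card_bipartite_eq {α β : Type*} {r : α → β → Prop}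
    [∀ a b, Decidable (r a b)] {s : Finset α} {t : Finset β}
    (hs : ∀ a ∈ s, (t.bipartiteAbove r a).Nonempty)
    (ht : ∀ b ∈ t, (s.bipartiteBelow r b).Nonempty)
    (hr : ∀ a ∈ s, ∀ b ∈ t, r a b → #(t.bipartiteAbove r a) = #(s.bipartiteBelow r b)) :
    #s = #t := by
  have nsmul_inv {n : ℕ} (hn : 0 < n) : n • (n : ℚ)⁻¹ = 1 := by
    rw [nsmul_eq_mul, mul_inv_cancel₀ (Nat.cast_ne_zero.2 hn.ne')]
  have weighted_count : (#s : ℚ) = #t := calc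
    (#s : ℚ) = ∑ a ∈ s, ∑ _ ∈ t.bipartiteAbove r a, (#(t.bipartiteAbove r a) : ℚ)⁻¹ := by
      rw [cast_card]
      exact sum_congr rfl fun a ha => by rw [sum_const, nsmul_inv (hs a ha).card_pos]
    _ = ∑ a ∈ s, ∑ b ∈ t.bipartiteAbove r a, (#(s.bipartiteBelow r b) : ℚ)⁻¹ :=
      sum_congr rfl fun a ha => sum_congr rfl fun b hb => by
        obtain ⟨hbt, hab⟩ := (mem_bipartiteAbove r).1 hb
        rw [hr a ha b hbt hab]
    _ = ∑ b ∈ t, ∑ _ ∈ s.bipartiteBelow r b, (#(s.bipartiteBelow r b) : ℚ)⁻¹ :=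
      sum_sum_bipartiteAbove_eq_sum_sum_bipartiteBelow r _
    _ = #t := by
      rw [cast_card]
      exact sum_congr rfl fun b hb => by rw [sum_const, nsmul_inv (ht b hb).card_pos]
  exact_mod_cast weighted_count

theorem mul_ne_of_dvd {α e μ : ℤ} (hα : 0 < α) (he : 0 < e) (hμe : μ < 2 * e) (hαe : α ∣ e)
    (hαμ : α ∣ μ) : α * e ≠ (2 * e - μ) * (e - μ) := by
  obtain ⟨e', rfl⟩ := hαe
  obtain ⟨μ', rfl⟩ := hαμ
  have he' : 0 < e' := pos_of_mul_pos_right he hα.le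
  have hμe' : μ' < 2 * e' := by nlinarith
  intro heq
  have heq' : e' = (2 * e' - μ') * (e' - μ') :=
    mul_left_cancel₀ (mul_pos hα hα).ne' (by linear_combination heq)
  have hμ' : 0 < e' - μ' := pos_of_mul_pos_right (heq' ▸ he') (by omega)
  nlinarith

section ClosedNeighbourhoods

variable {V : Type*} {G : SimpleGraph V}

theorem compl_adj_iff_notMem_closedNbhd [G.LocallyFinite] {v w : V} :
    Gᶜ.Adj v w ↔ w ∉ closedNbhd G v := by
  simp [closedNbhd, eq_comm]

variable [G.LocallyFinite]

theorem mem_closedNbhd {v w : V} : w ∈ closedNbhd G v ↔ w = v ∨ G.Adj v w := by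
  simp [closedNbhd]

theorem self_mem_closedNbhd (v : V) : v ∈ closedNbhd G v :=
  mem_closedNbhd.2 (Or.inl rfl)

theorem mem_closedNbhd_comm {v w : V} : w ∈ closedNbhd G v ↔ v ∈ closedNbhd G w := by
  rw [mem_closedNbhd, mem_closedNbhd, eq_comm, G.adj_comm]

theorem card_closedNbhd (v : V) : #(closedNbhd G v) = G.degree v + 1 := by
  simp [closedNbhd]

variable [DecidableEq V]

theorem coe_inter_closedNbhd_of_notMem {v w : V} (h : w ∉ closedNbhd G v) :
    (↑(closedNbhd G v ∩ closedNbhd G w) : Set V) = G.commonNeighbors v w := by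
  ext u
  simp only [coe_inter, Set.mem_inter_iff, mem_coe, mem_commonNeighbors, mem_closedNbhd] at h ⊢
  grind [G.adj_comm]

theorem card_inter_closedNbhd_of_adj {v w : V} (h : G.Adj v w) :
    #(closedNbhd G v ∩ closedNbhd G w) = (G.commonNeighbors v w).ncard + 2 := by
  have hdisj : Disjoint {v, w} (G.neighborFinset v ∩ G.neighborFinset w) := by
    simp [Finset.disjoint_left]
  have hunion : closedNbhd G v ∩ closedNbhd G w =
      {v, w} ∪ (G.neighborFinset v ∩ G.neighborFinset w) := by
    ext u
    simp only [mem_inter, mem_closedNbhd, mem_union, mem_insert, mem_singleton,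
      mem_neighborFinset]
    grind [G.adj_comm]
  have hcommon : G.commonNeighbors v w = ↑(G.neighborFinset v ∩ G.neighborFinset w) := by
    ext u
    simp [mem_commonNeighbors]
  rw [hunion, card_union_of_disjoint hdisj, card_pair h.ne, hcommon, Set.ncard_coe_finset, add_comm]

theorem isCoedgeRegular_iff {k μ : ℕ} :
    IsCoedgeRegular G k μ ↔ (∀ v, #(closedNbhd G v) = k + 1) ∧
      ∀ v w, w ∉ closedNbhd G v → #(closedNbhd G v ∩ closedNbhd G w) = μ := by
  have ncard_eq {v w : V} (h : w ∉ closedNbhd G v) :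
      #(closedNbhd G v ∩ closedNbhd G w) = (G.commonNeighbors v w).ncard := by
    rw [← coe_inter_closedNbhd_of_notMem h, Set.ncard_coe_finset]
  constructor
  · rintro ⟨hk, hμ⟩
    refine ⟨fun v => by rw [card_closedNbhd, hk v], fun v w h => ?_⟩
    have hadj := compl_adj_iff_notMem_closedNbhd.2 h
    rw [ncard_eq h, hμ hadj.ne hadj.2]
  · rintro ⟨hk, hμ⟩
    refine ⟨fun v => by simpa [card_closedNbhd] using hk v, fun v w hne hadj => ?_⟩
    have h : w ∉ closedNbhd G v := compl_adj_iff_notMem_closedNbhd.1 ⟨hne, hadj⟩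
    rw [← ncard_eq h, hμ v w h]

theorem map_closedNbhd_induce (S : Finset V) [(G.induce (S : Set V)).LocallyFinite]
    (v : (S : Set V)) :
    (closedNbhd (G.induce (S : Set V)) v).map (.subtype _) = closedNbhd G v ∩ S := by
  ext w
  simp only [mem_map, mem_closedNbhd, mem_inter, Subtype.exists, comap_adj,
    Function.Embedding.subtype_apply]
  grind

theorem mem_twinClass {p w : V} : w ∈ twinClass G p ↔ closedNbhd G w = closedNbhd G p := by
  rw [twinClass, mem_filter, and_iff_right_iff_imp]
  exact fun hw => hw ▸ self_mem_closedNbhd w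

theorem mem_closedNbhd_iff_of_mem_twinClass {p w y : V} (hw : w ∈ twinClass G p) :
    w ∈ closedNbhd G y ↔ p ∈ closedNbhd G y := by
  rw [mem_closedNbhd_comm, mem_twinClass.1 hw, mem_closedNbhd_comm]

theorem twinClass_subset_closedNbhd {p y : V} (hy : y ∈ closedNbhd G p) :
    twinClass G p ⊆ closedNbhd G y := fun _ hw =>
  (mem_closedNbhd_iff_of_mem_twinClass hw).2 (mem_closedNbhd_comm.1 hy)

theorem dvd_card_of_forall_twinClass_subset {α : ℕ} (hα : ∀ p, #(twinClass G p) = α) {S : Finset V}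
    (hS : ∀ p ∈ S, twinClass G p ⊆ S) : α ∣ #S := by
  rw [card_eq_sum_card_image (closedNbhd G) S]
  refine dvd_sum fun N hN => ?_
  obtain ⟨p, hp, rfl⟩ := mem_image.1 hN
  have hfiber : {w ∈ S | closedNbhd G w = closedNbhd G p} = twinClass G p := by
    ext w
    rw [mem_filter, mem_twinClass, and_iff_right_iff_imp]
    exact fun hw => hS p hp (mem_twinClass.2 hw)
  rw [hfiber, hα]

end ClosedNeighbourhoods

section IndependentSets

variable {V : Type*} {G : SimpleGraph V}

theorem isNIndepSet_three_iff [DecidableEq V] [G.LocallyFinite] {s : Finset V} :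
    G.IsNIndepSet 3 s ↔ ∃ x y z, y ∉ closedNbhd G x ∧ z ∉ closedNbhd G x ∧ z ∉ closedNbhd G y ∧
      s = {x, y, z} := by
  rw [← isNClique_compl, is3Clique_iff]
  simp only [compl_adj_iff_notMem_closedNbhd]

theorem exists_mem_closedNbhd_of_isNIndepSet [G.LocallyFinite] {n : ℕ}
    (hfree : G.IndepSetFree (n + 1)) {s : Finset V} (hs : G.IsNIndepSet n s) (w : V) :
    ∃ v ∈ s, w ∈ closedNbhd G v := by
  classical
  by_contra! hw
  rw [← isNClique_compl] at hs
  exact hfree _ ((isNClique_compl G).1 (hs.insert fun v hv =>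
    (compl_adj_iff_notMem_closedNbhd.2 (hw v hv)).symm))

theorem indepSetFree_induce_iff {S : Set V} {n : ℕ} :
    (G.induce S).IndepSetFree n ↔ G.IndepSetFreeOn S n := by
  have induce_compl : (G.induce S)ᶜ = Gᶜ.induce S := by
    ext v w
    simp [Subtype.ext_iff]
  rw [← cliqueFree_compl, induce_compl, cliqueFree_induce_iff]
  simp only [CliqueFreeOn, IndepSetFreeOn, isNClique_compl]

theorem hasClaw_iff_not_indepSetFreeOn {t : ℕ} :
    HasClaw G t ↔ ∃ v, ¬ G.IndepSetFreeOn (G.neighborSet v) t := by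
  simp only [HasClaw, IndepSetFreeOn, isNIndepSet_iff, IsIndepSet, not_forall, not_not]
  exact exists_congr fun v => exists_congr fun s => by
    simp only [Set.subset_def, mem_coe, mem_neighborSet]
    tauto

theorem univ_eq_union_closedNbhd [DecidableEq V] [G.LocallyFinite] (hfree : G.IndepSetFree 4)
    {x y z : V} (hxy : y ∉ closedNbhd G x) (hxz : z ∉ closedNbhd G x) (hyz : z ∉ closedNbhd G y) :
    Set.univ = (↑(closedNbhd G x ∪ closedNbhd G y ∪ closedNbhd G z) : Set V) := by
  refine (Set.eq_univ_of_forall fun w => ?_).symm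
  obtain ⟨v, hv, hw⟩ := exists_mem_closedNbhd_of_isNIndepSet hfree
    (isNIndepSet_three_iff.2 ⟨x, y, z, hxy, hxz, hyz, rfl⟩) w
  grind

theorem hasClaw_three_iff [G.LocallyFinite] :
    HasClaw G 3 ↔ ∃ p x y z, y ∉ closedNbhd G x ∧ z ∉ closedNbhd G x ∧ z ∉ closedNbhd G y ∧
      x ∈ closedNbhd G p ∧ y ∈ closedNbhd G p ∧ z ∈ closedNbhd G p := by
  classical
  simp only [hasClaw_iff_not_indepSetFreeOn, IndepSetFreeOn, not_forall, not_not,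
    isNIndepSet_three_iff]
  constructor
  · rintro ⟨p, s, hs, x, y, z, hxy, hxz, hyz, rfl⟩
    have mem_of_mem {w : V} (hw : w ∈ ({x, y, z} : Finset V)) : w ∈ closedNbhd G p :=
      mem_closedNbhd.2 (Or.inr (hs (mem_coe.2 hw)))
    exact ⟨p, x, y, z, hxy, hxz, hyz, mem_of_mem (by simp), mem_of_mem (by simp),
      mem_of_mem (by simp)⟩
  · rintro ⟨p, x, y, z, hxy, hxz, hyz, hx, hy, hz⟩
    refine ⟨p, {x, y, z}, fun w hw => ?_, x, y, z, hxy, hxz, hyz, rfl⟩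
    rw [mem_neighborSet]
    grind [mem_closedNbhd, G.adj_comm]

end IndependentSets

section Quadrangles

variable {V : Type*} {G : SimpleGraph V}

theorem dist_eq_two_iff_compl_adj {v w : V} :
    G.dist v w = 2 ↔ Gᶜ.Adj v w ∧ (G.commonNeighbors v w).Nonempty := by
  rw [SimpleGraph.dist, ENat.toNat_eq_iff two_ne_zero, compl_adj, and_assoc]
  exact edist_eq_two_iff

theorem hasQuadrangle_iff :
    HasQuadrangle G ↔ ∃ x z₁ y z₂, Gᶜ.Adj x y ∧ Gᶜ.Adj z₁ z₂ ∧
      G.Adj x z₁ ∧ G.Adj z₁ y ∧ G.Adj y z₂ ∧ G.Adj z₂ x := by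
  simp only [HasQuadrangle, dist_eq_two_iff_compl_adj]
  constructor
  · rintro ⟨x, z₁, y, z₂, ⟨hxy, -⟩, ⟨hz, -⟩, hcycle⟩
    exact ⟨x, z₁, y, z₂, hxy, hz, hcycle⟩
  · rintro ⟨x, z₁, y, z₂, hxy, hz, h₁, h₂, h₃, h₄⟩
    exact ⟨x, z₁, y, z₂, ⟨hxy, z₁, h₁, h₂.symm⟩, ⟨hz, x, h₁.symm, h₄⟩, h₁, h₂, h₃, h₄⟩

theorem HasQuadrangle.of_induce {S : Set V} (h : HasQuadrangle (G.induce S)) :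
    HasQuadrangle G := by
  obtain ⟨x, z₁, y, z₂, hxy, hz, hcycle⟩ := hasQuadrangle_iff.1 h
  refine hasQuadrangle_iff.2 ⟨x, z₁, y, z₂, ?_, ?_, hcycle⟩
  · exact ⟨Subtype.coe_injective.ne hxy.1, hxy.2⟩
  · exact ⟨Subtype.coe_injective.ne hz.1, hz.2⟩

variable [G.LocallyFinite] [DecidableEq V]

theorem inter_closedNbhd_subset (hq : ¬ HasQuadrangle G) {x y p : V} (hxy : y ∉ closedNbhd G x)
    (hpx : p ∈ closedNbhd G x) (hpy : p ∈ closedNbhd G y) :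
    closedNbhd G x ∩ closedNbhd G y ⊆ closedNbhd G p := by
  have adj_of_mem {q : V} (hqx : q ∈ closedNbhd G x) (hqy : q ∈ closedNbhd G y) :
      G.Adj x q ∧ G.Adj y q := by
    rw [← mem_commonNeighbors, ← coe_inter_closedNbhd_of_notMem hxy, mem_coe, mem_inter]
    exact ⟨hqx, hqy⟩
  intro q hqxy
  by_contra hpq
  obtain ⟨hqx, hqy⟩ := mem_inter.1 hqxy
  obtain ⟨hxp, hyp⟩ := adj_of_mem hpx hpy
  obtain ⟨hxq, hyq⟩ := adj_of_mem hqx hqy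
  exact hq (hasQuadrangle_iff.2 ⟨x, p, y, q, compl_adj_iff_notMem_closedNbhd.2 hxy,
    compl_adj_iff_notMem_closedNbhd.2 hpq, hxp, hyp.symm, hyq, hxq.symm⟩)

theorem inter_inter_closedNbhd_subset (hq : ¬ HasQuadrangle G) {p y z w b : V}
    (hy : y ∈ closedNbhd G p) (hz : z ∈ closedNbhd G p) (hyz : z ∉ closedNbhd G y)
    (hwy : w ∈ closedNbhd G y) (hwp : w ∉ closedNbhd G p) (hbz : b ∈ closedNbhd G z)
    (hbw : b ∈ closedNbhd G w) :
    closedNbhd G y ∩ closedNbhd G z ∩ closedNbhd G w ⊆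
      closedNbhd G y ∩ closedNbhd G z ∩ closedNbhd G b := by
  have hyz_sub := inter_closedNbhd_subset hq hyz (mem_closedNbhd_comm.1 hy)
    (mem_closedNbhd_comm.1 hz)
  have hzw : w ∉ closedNbhd G z := fun hwz => hwp (hyz_sub (mem_inter.2 ⟨hwy, hwz⟩))
  have hzw_sub := inter_closedNbhd_subset hq hzw hbz hbw
  grind

/-- Since `N[p] \ S` lies in the closed neighbourhood of every vertex of `S`, passing from `G` to
`S` removes this one set from each intersection `N[y] ∩ N[z]`, which is contained in `N[p]`. -/
theorem isCoedgeRegular_induce (hq : ¬ HasQuadrangle G) {p : V} {S : Finset V} {d μ : ℕ}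
    [(G.induce (S : Set V)).LocallyFinite] (hSp : S ⊆ closedNbhd G p)
    (hS : ∀ y ∈ S, closedNbhd G p \ S ⊆ closedNbhd G y)
    (hd : ∀ y ∈ S, #(closedNbhd G p ∩ closedNbhd G y) = d)
    (hμ : ∀ y ∈ S, ∀ z ∈ S, z ∉ closedNbhd G y → #(closedNbhd G y ∩ closedNbhd G z) = μ) :
    IsCoedgeRegular (G.induce (S : Set V)) (d - #(closedNbhd G p \ S) - 1)
      (μ - #(closedNbhd G p \ S)) := by
  have hrest {T : Finset V} (hT : T ⊆ closedNbhd G p) (hST : closedNbhd G p \ S ⊆ T) :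
      #(T ∩ S) = #T - #(closedNbhd G p \ S) := by
    rw [← card_sdiff_of_subset hST]
    congr 1
    grind
  refine isCoedgeRegular_iff.2 ⟨fun ⟨y, hy⟩ => ?_, fun ⟨y, hy⟩ ⟨z, hz⟩ hyz => ?_⟩
  · have hcard : #(closedNbhd G y ∩ S) = d - #(closedNbhd G p \ S) := by
      rw [← hd y hy, ← hrest inter_subset_left (subset_inter sdiff_subset (hS y hy)),
        inter_assoc, inter_eq_right.2 (inter_subset_right.trans hSp)]
    have hpos : 0 < #(closedNbhd G y ∩ S) :=
      card_pos.2 ⟨y, mem_inter.2 ⟨self_mem_closedNbhd y, hy⟩⟩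
    rw [← card_map (.subtype _), map_closedNbhd_induce]
    dsimp only
    omega
  · have hyz' : z ∉ closedNbhd G y := by
      simpa [mem_closedNbhd] using hyz
    have hsub := inter_closedNbhd_subset hq hyz' (mem_closedNbhd_comm.1 (hSp hy))
      (mem_closedNbhd_comm.1 (hSp hz))
    rw [← card_map (.subtype _), map_inter, map_closedNbhd_induce, map_closedNbhd_induce,
      ← inter_inter_distrib_right, hrest hsub (subset_inter (hS y hy) (hS z hz)),
      hμ y hy z hz hyz']

end Quadrangles

namespace IsCoedgeRegular

variable {V : Type*} {G : SimpleGraph V} [G.LocallyFinite] {k μ : ℕ}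

theorem card_closedNbhd (h : IsCoedgeRegular G k μ) (v : V) : #(closedNbhd G v) = k + 1 := by
  rw [_root_.card_closedNbhd, h.isRegularOfDegree v]

theorem closedNbhd_eq_of_subset (h : IsCoedgeRegular G k μ) {v w : V}
    (hsub : closedNbhd G v ⊆ closedNbhd G w) : closedNbhd G v = closedNbhd G w :=
  eq_of_subset_of_card_le hsub (by rw [h.card_closedNbhd, h.card_closedNbhd])

section Counting

variable [DecidableEq V]

theorem card_inter_closedNbhd (h : IsCoedgeRegular G k μ) {v w : V} (hvw : w ∉ closedNbhd G v) :
    #(closedNbhd G v ∩ closedNbhd G w) = μ :=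
  (isCoedgeRegular_iff.1 h).2 v w hvw

theorem card_sdiff_closedNbhd_comm (h : IsCoedgeRegular G k μ) (v w : V) :
    #(closedNbhd G v \ closedNbhd G w) = #(closedNbhd G w \ closedNbhd G v) :=
  card_sdiff_comm (by rw [h.card_closedNbhd, h.card_closedNbhd])

theorem card_add_three_mul (h : IsCoedgeRegular G k μ) (hfree : G.IndepSetFree 4)
    {x y z : V} (hxy : y ∉ closedNbhd G x) (hxz : z ∉ closedNbhd G x) (hyz : z ∉ closedNbhd G y) :
    Nat.card V + 3 * μ =
      3 * (k + 1) + #(closedNbhd G x ∩ closedNbhd G y ∩ closedNbhd G z) := by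
  have hxyz := card_union_add_card_inter (closedNbhd G x ∪ closedNbhd G y) (closedNbhd G z)
  have hxy' := card_union_add_card_inter (closedNbhd G x) (closedNbhd G y)
  have hz := card_union_add_card_inter (closedNbhd G x ∩ closedNbhd G z)
    (closedNbhd G y ∩ closedNbhd G z)
  rw [union_inter_distrib_right, ← Set.ncard_coe_finset, ← univ_eq_union_closedNbhd hfree hxy hxz
    hyz, Set.ncard_univ] at hxyz
  rw [← inter_inter_distrib_right] at hz
  simp only [h.card_closedNbhd, h.card_inter_closedNbhd hxy, h.card_inter_closedNbhd hxz,
    h.card_inter_closedNbhd hyz] at hxyz hxy' hz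
  omega

section Pentagons

variable {p y z w : V}

theorem card_sdiff_inter_closedNbhd_add (h : IsCoedgeRegular G k μ) (hq : ¬ HasQuadrangle G)
    (hy : y ∈ closedNbhd G p) (hz : z ∈ closedNbhd G p) (hyz : z ∉ closedNbhd G y)
    (hwy : w ∈ closedNbhd G y) (hwp : w ∉ closedNbhd G p) :
    #((closedNbhd G z \ closedNbhd G p) ∩ closedNbhd G w) +
      #(closedNbhd G y ∩ closedNbhd G z ∩ closedNbhd G w) = μ := by
  have hyz_sub := inter_closedNbhd_subset hq hyz (mem_closedNbhd_comm.1 hy)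
    (mem_closedNbhd_comm.1 hz)
  have hwp_sub := inter_closedNbhd_subset hq hwp hy (mem_closedNbhd_comm.1 hwy)
  have hzw : w ∉ closedNbhd G z := fun hwz => hwp (hyz_sub (mem_inter.2 ⟨hwy, hwz⟩))
  have hcommon : closedNbhd G y ∩ closedNbhd G z ∩ closedNbhd G w =
      closedNbhd G z ∩ closedNbhd G w ∩ closedNbhd G p := by
    grind
  rw [sdiff_inter_right_comm, hcommon, card_sdiff_add_card_inter, h.card_inter_closedNbhd hzw]

theorem sdiff_inter_closedNbhd_nonempty (h : IsCoedgeRegular G k μ) (hq : ¬ HasQuadrangle G)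
    (hy : y ∈ closedNbhd G p) (hz : z ∈ closedNbhd G p) (hyz : z ∉ closedNbhd G y)
    (hwy : w ∈ closedNbhd G y) (hwp : w ∉ closedNbhd G p) :
    ((closedNbhd G z \ closedNbhd G p) ∩ closedNbhd G w).Nonempty := by
  have hlt : #(closedNbhd G y ∩ closedNbhd G z ∩ closedNbhd G w) < μ := by
    rw [← h.card_inter_closedNbhd hyz]
    exact card_lt_card ((ssubset_iff_of_subset inter_subset_left).2
      ⟨p, mem_inter.2 ⟨mem_closedNbhd_comm.1 hy, mem_closedNbhd_comm.1 hz⟩,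
        fun hp => hwp (mem_closedNbhd_comm.1 (mem_inter.1 hp).2)⟩)
  have hadd := h.card_sdiff_inter_closedNbhd_add hq hy hz hyz hwy hwp
  rw [← card_pos]
  omega

/-- `N[y] \ N[p]` and `N[z] \ N[p]` have the same size because in the bipartite graph of edges
between them the two ends `w` and `b` of every edge have the same degree
`μ - |N[y] ∩ N[z] ∩ N[w]| = μ - |N[y] ∩ N[z] ∩ N[b]| > 0`. -/
theorem card_sdiff_closedNbhd_eq (h : IsCoedgeRegular G k μ) (hq : ¬ HasQuadrangle G)
    (hy : y ∈ closedNbhd G p) (hz : z ∈ closedNbhd G p) (hyz : z ∉ closedNbhd G y) :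
    #(closedNbhd G p \ closedNbhd G y) = #(closedNbhd G p \ closedNbhd G z) := by
  have hzy : y ∉ closedNbhd G z := fun hzy => hyz (mem_closedNbhd_comm.1 hzy)
  have above (w : V) : (closedNbhd G z \ closedNbhd G p).bipartiteAbove (· ∈ closedNbhd G ·) w =
      (closedNbhd G z \ closedNbhd G p) ∩ closedNbhd G w := by
    simp only [bipartiteAbove, mem_closedNbhd_comm, filter_mem_eq_inter]
  have below (b : V) : (closedNbhd G y \ closedNbhd G p).bipartiteBelow (· ∈ closedNbhd G ·) b =
      (closedNbhd G y \ closedNbhd G p) ∩ closedNbhd G b := by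
    simp only [bipartiteBelow, filter_mem_eq_inter]
  rw [h.card_sdiff_closedNbhd_comm, h.card_sdiff_closedNbhd_comm p z]
  refine card_eq_card_of_forall_card_bipartite_eq (r := (· ∈ closedNbhd G ·))
    (fun w hw => ?_) (fun b hb => ?_) fun w hw b hb hwb => ?_ <;>
    simp only [above, below, mem_sdiff] at *
  · exact h.sdiff_inter_closedNbhd_nonempty hq hy hz hyz hw.1 hw.2
  · exact h.sdiff_inter_closedNbhd_nonempty hq hz hy hzy hb.1 hb.2
  · have hcommon : closedNbhd G y ∩ closedNbhd G z ∩ closedNbhd G w =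
        closedNbhd G z ∩ closedNbhd G y ∩ closedNbhd G b := by
      rw [inter_comm (closedNbhd G z)]
      exact (inter_inter_closedNbhd_subset hq hy hz hyz hw.1 hw.2 hb.1
        (mem_closedNbhd_comm.1 hwb)).antisymm (inter_comm (closedNbhd G z) _ ▸
          inter_inter_closedNbhd_subset hq hz hy hzy hb.1 hb.2 hw.1 hwb)
    have hw' := h.card_sdiff_inter_closedNbhd_add hq hy hz hyz hw.1 hw.2
    have hb' := h.card_sdiff_inter_closedNbhd_add hq hz hy hzy hb.1 hb.2
    rw [hcommon] at hw'
    omega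

end Pentagons

end Counting

section TwinClasses

variable [DecidableEq V]

section Twins

variable {p x y z : V}

theorem card_sdiff_closedNbhd_eq_of_notMem_twinClass (h : IsCoedgeRegular G k μ)
    (hq : ¬ HasQuadrangle G) (hy : y ∈ closedNbhd G p \ twinClass G p)
    (hz : z ∈ closedNbhd G p \ twinClass G p) :
    #(closedNbhd G p \ closedNbhd G y) = #(closedNbhd G p \ closedNbhd G z) := by
  have exists_notMem {w : V} (hw : w ∈ closedNbhd G p \ twinClass G p) :
      ∃ u ∈ closedNbhd G p, u ∉ closedNbhd G w := by
    by_contra! hsub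
    exact (mem_sdiff.1 hw).2 (mem_twinClass.2 (h.closedNbhd_eq_of_subset hsub).symm)
  obtain ⟨u, hup, huy⟩ := exists_notMem hy
  obtain ⟨v, hvp, hvz⟩ := exists_notMem hz
  rw [mem_sdiff] at hy hz
  by_contra hne
  have mem_of_ne {a b : V} (ha : a ∈ closedNbhd G p) (hb : b ∈ closedNbhd G p)
      (hab : #(closedNbhd G p \ closedNbhd G a) ≠ #(closedNbhd G p \ closedNbhd G b)) :
      b ∈ closedNbhd G a := by
    by_contra hmem
    exact hab (h.card_sdiff_closedNbhd_eq hq ha hb hmem)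
  have hyu := h.card_sdiff_closedNbhd_eq hq hy.1 hup huy
  have hzv := h.card_sdiff_closedNbhd_eq hq hz.1 hvp hvz
  have hzu : z ∈ closedNbhd G u := mem_of_ne hup hz.1 (by omega)
  have hvu : v ∈ closedNbhd G u := mem_of_ne hup hvp (by omega)
  have hvy : v ∈ closedNbhd G y := mem_of_ne hy.1 hvp (by omega)
  exact hvz (inter_closedNbhd_subset hq huy (mem_of_ne hy.1 hz.1 hne) hzu
    (mem_inter.2 ⟨hvy, hvu⟩))

theorem exists_isCoedgeRegular_induce_sdiff_twinClass (h : IsCoedgeRegular G k μ)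
    (hq : ¬ HasQuadrangle G) (p : V)
    [(G.induce (closedNbhd G p \ twinClass G p : Finset V)).LocallyFinite] :
    ∃ k', IsCoedgeRegular (G.induce (closedNbhd G p \ twinClass G p : Finset V)) k'
      (μ - #(twinClass G p)) := by
  have hrest : closedNbhd G p \ (closedNbhd G p \ twinClass G p) = twinClass G p :=
    Finset.sdiff_sdiff_eq_self (filter_subset _ _)
  obtain ⟨d, hd⟩ : ∃ d, ∀ y ∈ closedNbhd G p \ twinClass G p,
      #(closedNbhd G p ∩ closedNbhd G y) = d := by
    obtain hempty | ⟨z, hz⟩ := (closedNbhd G p \ twinClass G p).eq_empty_or_nonempty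
    · simp [hempty]
    · refine ⟨#(closedNbhd G p ∩ closedNbhd G z), fun y hy => ?_⟩
      have hyz := h.card_sdiff_closedNbhd_eq_of_notMem_twinClass hq hy hz
      have hcard_y := card_inter_add_card_sdiff (closedNbhd G p) (closedNbhd G y)
      have hcard_z := card_inter_add_card_sdiff (closedNbhd G p) (closedNbhd G z)
      omega
  have hreg := isCoedgeRegular_induce hq sdiff_subset
    (fun y hy => hrest.trans_subset (twinClass_subset_closedNbhd (mem_sdiff.1 hy).1)) hd
    fun y _ z _ hyz => h.card_inter_closedNbhd hyz
  rw [hrest] at hreg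
  exact ⟨_, hreg⟩

theorem exists_mem_inter_notMem_closedNbhd (h : IsCoedgeRegular G k μ)
    (hfree : G.IndepSetFree 4) (hxy : y ∉ closedNbhd G x) (hxz : z ∉ closedNbhd G x)
    (hyz : z ∉ closedNbhd G y) (hx : x ∈ closedNbhd G p) (hy : y ∈ closedNbhd G p)
    (hz : z ∈ closedNbhd G p) (hq : ¬ HasQuadrangle G) :
    ∃ q ∈ closedNbhd G y ∩ closedNbhd G z, q ∉ closedNbhd G x := by
  by_contra! hsub
  obtain ⟨u, hux, hup⟩ : ∃ u ∈ closedNbhd G x, u ∉ closedNbhd G p := by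
    by_contra! hxp
    exact hxy (h.closedNbhd_eq_of_subset hxp ▸ hy)
  have notMem_u {w : V} (hw : w ∈ closedNbhd G p) (hxw : w ∉ closedNbhd G x) :
      w ∉ closedNbhd G u := fun hwu =>
    hup (inter_closedNbhd_subset hq hxw (mem_closedNbhd_comm.1 hx) (mem_closedNbhd_comm.1 hw)
      (mem_inter.2 ⟨hux, mem_closedNbhd_comm.1 hwu⟩))
  have hcard_x := h.card_add_three_mul hfree hxy hxz hyz
  have hcard_u := h.card_add_three_mul hfree (notMem_u hy hxy) (notMem_u hz hxz) hyz
  have heq : closedNbhd G u ∩ closedNbhd G y ∩ closedNbhd G z =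
      closedNbhd G x ∩ closedNbhd G y ∩ closedNbhd G z :=
    eq_of_subset_of_card_le (fun w hw => by grind) (by omega)
  have hp : p ∈ closedNbhd G x ∩ closedNbhd G y ∩ closedNbhd G z := by
    simp only [mem_inter]
    exact ⟨⟨mem_closedNbhd_comm.1 hx, mem_closedNbhd_comm.1 hy⟩, mem_closedNbhd_comm.1 hz⟩
  rw [← heq] at hp
  exact hup (mem_closedNbhd_comm.1 (mem_inter.1 (mem_inter.1 hp).1).1)

end Twins

section ClawFree

variable {p y : V}

theorem two_mul_card_sdiff_add_of_not_hasClaw (h : IsCoedgeRegular G k μ)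
    (hq : ¬ HasQuadrangle G) (hclaw : ¬ HasClaw G 3) (hy : y ∈ closedNbhd G p)
    (hne : closedNbhd G y ≠ closedNbhd G p) :
    2 * #(closedNbhd G p \ closedNbhd G y) + μ = k + 1 := by
  obtain ⟨z, hz, hyz⟩ : ∃ z ∈ closedNbhd G p, z ∉ closedNbhd G y := by
    by_contra! hsub
    exact hne (h.closedNbhd_eq_of_subset hsub).symm
  have hcover : closedNbhd G p ⊆ closedNbhd G y ∪ closedNbhd G z := fun w hw => by
    by_contra hwyz
    rw [mem_union, not_or] at hwyz
    exact hclaw (hasClaw_three_iff.2 ⟨p, y, z, w, hyz, hwyz.1, hwyz.2, hy, hz, hw⟩)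
  have hsub := inter_closedNbhd_subset hq hyz (mem_closedNbhd_comm.1 hy)
    (mem_closedNbhd_comm.1 hz)
  have hdiff : (closedNbhd G p ∩ closedNbhd G z) \ closedNbhd G y =
      closedNbhd G p \ closedNbhd G y := by
    grind
  have hinter : closedNbhd G p ∩ closedNbhd G z ∩ closedNbhd G y =
      closedNbhd G y ∩ closedNbhd G z := by
    grind
  have hp := card_inter_add_card_sdiff (closedNbhd G p) (closedNbhd G z)
  have hpz := card_inter_add_card_sdiff (closedNbhd G p ∩ closedNbhd G z) (closedNbhd G y)
  rw [← h.card_sdiff_closedNbhd_eq hq hy hz hyz, h.card_closedNbhd] at hp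
  rw [hinter, hdiff, h.card_inter_closedNbhd hyz] at hpz
  omega

theorem card_compl_closedNbhd_mul [Fintype V] (h : IsCoedgeRegular G k μ) (y : V) :
    #(closedNbhd G y)ᶜ * μ = ∑ p ∈ closedNbhd G y, #(closedNbhd G p \ closedNbhd G y) := by
  have h_above {z : V} (hz : z ∈ (closedNbhd G y)ᶜ) :
      #((closedNbhd G y).bipartiteAbove (· ∈ closedNbhd G ·) z) = μ := by
    simp only [bipartiteAbove, mem_closedNbhd_comm, filter_mem_eq_inter]
    exact h.card_inter_closedNbhd (mem_compl.1 hz)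
  have h_below (p : V) : ((closedNbhd G y)ᶜ).bipartiteBelow (· ∈ closedNbhd G ·) p =
      closedNbhd G p \ closedNbhd G y := by
    rw [bipartiteBelow, filter_mem_eq_inter, inter_comm, ← sdiff_eq_inter_compl]
  calc
    #(closedNbhd G y)ᶜ * μ
      = ∑ z ∈ (closedNbhd G y)ᶜ, #((closedNbhd G y).bipartiteAbove (· ∈ closedNbhd G ·) z) := by
        rw [sum_congr rfl fun z hz => h_above hz, sum_const, smul_eq_mul]
    _ = ∑ p ∈ closedNbhd G y, #(closedNbhd G p \ closedNbhd G y) := by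
        rw [sum_card_bipartiteAbove_eq_sum_card_bipartiteBelow]
        exact sum_congr rfl fun p _ => by rw [h_below]

section ConstantDifferences

variable [Finite V] {e : ℕ}

theorem card_mul_add_card_twinClass_mul (h : IsCoedgeRegular G k μ)
    (he : ∀ p, ∀ y ∈ closedNbhd G p, closedNbhd G y ≠ closedNbhd G p →
      #(closedNbhd G p \ closedNbhd G y) = e) (y : V) :
    Nat.card V * μ + #(twinClass G y) * e = (k + 1) * (μ + e) := by
  have : Fintype V := Fintype.ofFinite V
  have htwin : ∑ p ∈ twinClass G y, #(closedNbhd G p \ closedNbhd G y) = 0 :=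
    sum_eq_zero fun p hp => by rw [mem_twinClass.1 hp, Finset.sdiff_self, card_empty]
  have hrest : ∑ p ∈ closedNbhd G y \ twinClass G y, #(closedNbhd G p \ closedNbhd G y) =
      #(closedNbhd G y \ twinClass G y) * e :=
    sum_const_nat fun p hp => he p y (mem_closedNbhd_comm.1 (mem_sdiff.1 hp).1)
      fun heq => (mem_sdiff.1 hp).2 (mem_twinClass.2 heq.symm)
  have hsub : twinClass G y ⊆ closedNbhd G y := filter_subset _ _
  have hcount := h.card_compl_closedNbhd_mul y
  rw [← sum_sdiff hsub, htwin, hrest, add_zero] at hcount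
  rw [Nat.card_eq_fintype_card, ← card_compl_add_card (closedNbhd G y), ← h.card_closedNbhd y,
    ← card_sdiff_add_card_eq_card hsub, add_mul, hcount]
  ring

theorem card_twinClass_dvd (h : IsCoedgeRegular G k μ) (he_pos : 0 < e)
    (he : ∀ p, ∀ y ∈ closedNbhd G p, closedNbhd G y ≠ closedNbhd G p →
      #(closedNbhd G p \ closedNbhd G y) = e) (v : V) {S : Finset V}
    (hS : ∀ w ∈ S, twinClass G w ⊆ S) : #(twinClass G v) ∣ #S := by
  refine dvd_card_of_forall_twinClass_subset (fun w => ?_) hS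
  have hw := h.card_mul_add_card_twinClass_mul he w
  rw [← h.card_mul_add_card_twinClass_mul he v] at hw
  exact Nat.eq_of_mul_eq_mul_right he_pos (Nat.add_left_cancel hw)

end ConstantDifferences

end ClawFree

end TwinClasses

theorem card_eq_three_mul_of_not_hasClaw (h : IsCoedgeRegular G k μ)
    (hfree : G.IndepSetFree 4) (hclaw : ¬ HasClaw G 3) {x y z : V} (hxy : y ∉ closedNbhd G x)
    (hxz : z ∉ closedNbhd G x) (hyz : z ∉ closedNbhd G y) :
    Nat.card V + 3 * μ = 3 * (k + 1) := by
  classical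
  have htriple : closedNbhd G x ∩ closedNbhd G y ∩ closedNbhd G z = ∅ := by
    refine eq_empty_of_forall_notMem fun w hw => hclaw (hasClaw_three_iff.2 ?_)
    rw [mem_inter, mem_inter, mem_closedNbhd_comm, mem_closedNbhd_comm (v := y),
      mem_closedNbhd_comm (v := z)] at hw
    exact ⟨w, x, y, z, hxy, hxz, hyz, hw.1.1, hw.1.2, hw.2⟩
  rw [h.card_add_three_mul hfree hxy hxz hyz, htriple, card_empty, add_zero]

theorem two_mul_lt_card_add [Finite V] (h : IsCoedgeRegular G k μ) {x y z : V}
    (hxy : y ∉ closedNbhd G x) (hxz : z ∉ closedNbhd G x) (hyz : z ∉ closedNbhd G y) :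
    2 * (k + 1) < Nat.card V + μ := by
  classical
  have : Fintype V := Fintype.ofFinite V
  have hlt : #(closedNbhd G x ∪ closedNbhd G y) < Fintype.card V :=
    card_lt_univ_of_notMem (x := z) (by simp [hxz, hyz])
  have hunion := card_union_add_card_inter (closedNbhd G x) (closedNbhd G y)
  rw [h.card_inter_closedNbhd hxy, h.card_closedNbhd, h.card_closedNbhd] at hunion
  rw [Nat.card_eq_fintype_card]
  omega

/-- There are `6e` vertices, where `e` is the common size of the nonempty sets `N[v] \ N[w]` for
`w ∈ N[v]`, and counting edges expresses the size of a twin class through `e` and `μ`. This is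
impossible because that size divides both `e` and `μ`. -/
theorem indepSetFree_three_of_not_hasClaw (h : IsCoedgeRegular G k μ) (hμ : μ ≠ 0)
    (hq : ¬ HasQuadrangle G) (hfree : G.IndepSetFree 4) (hclaw : ¬ HasClaw G 3) :
    G.IndepSetFree 3 := by
  classical
  intro s hs
  obtain ⟨x, y, z, hxy, hxz, hyz, -⟩ := isNIndepSet_three_iff.1 hs
  have : Finite V := Set.finite_univ_iff.1
    (univ_eq_union_closedNbhd hfree hxy hxz hyz ▸ finite_toSet _)
  obtain ⟨p, hp⟩ : (closedNbhd G x ∩ closedNbhd G y).Nonempty := by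
    rwa [← card_ne_zero, h.card_inter_closedNbhd hxy]
  rw [mem_inter, mem_closedNbhd_comm, mem_closedNbhd_comm (v := y)] at hp
  obtain ⟨e, he⟩ : ∃ e, #(closedNbhd G p \ closedNbhd G x) = e := ⟨_, rfl⟩
  have he_pos : 0 < e := he ▸ card_pos.2 ⟨y, mem_sdiff.2 ⟨hp.2, hxy⟩⟩
  have hk : 2 * e + μ = k + 1 := he ▸ h.two_mul_card_sdiff_add_of_not_hasClaw hq hclaw hp.1
    fun heq => hxy (heq ▸ hp.2)
  have he' : ∀ v, ∀ w ∈ closedNbhd G v, closedNbhd G w ≠ closedNbhd G v →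
      #(closedNbhd G v \ closedNbhd G w) = e := fun v w hw hne => by
    have := h.two_mul_card_sdiff_add_of_not_hasClaw hq hclaw hw hne
    omega
  have hdvd_e : #(twinClass G x) ∣ e := he ▸ h.card_twinClass_dvd he_pos he' x fun w hw u hu => by
    simpa only [mem_sdiff, mem_closedNbhd_iff_of_mem_twinClass hu] using hw
  have hdvd_μ : #(twinClass G x) ∣ μ := by
    rw [← h.card_inter_closedNbhd hxy]
    refine h.card_twinClass_dvd he_pos he' x fun w hw u hu => ?_
    simpa only [mem_inter, mem_closedNbhd_iff_of_mem_twinClass hu] using hw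
  have hcard := h.card_eq_three_mul_of_not_hasClaw hfree hclaw hxy hxz hyz
  have hlt := h.two_mul_lt_card_add hxy hxz hyz
  have hedges := h.card_mul_add_card_twinClass_mul he' x
  have htwin_pos : 0 < #(twinClass G x) := card_pos.2 ⟨x, mem_twinClass.2 rfl⟩
  rw [← hk, show Nat.card V = 6 * e by omega] at hedges
  zify at hedges
  exact mul_ne_of_dvd (e := e) (μ := μ) (by omega) (by omega) (by omega)
    (Int.natCast_dvd_natCast.2 hdvd_e) (Int.natCast_dvd_natCast.2 hdvd_μ)
    (by linear_combination hedges)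

theorem card_twinClass_lt [DecidableEq V] (h : IsCoedgeRegular G k μ) (hq : ¬ HasQuadrangle G)
    (hfree : G.IndepSetFree 4) {p x y z : V} (hxy : y ∉ closedNbhd G x) (hxz : z ∉ closedNbhd G x)
    (hyz : z ∉ closedNbhd G y) (hx : x ∈ closedNbhd G p) (hy : y ∈ closedNbhd G p)
    (hz : z ∈ closedNbhd G p) : #(twinClass G p) < μ := by
  obtain ⟨q, hqyz, hqx⟩ := h.exists_mem_inter_notMem_closedNbhd hfree hxy hxz hyz hx hy hz hq
  have hq_notMem : q ∉ twinClass G p := fun hqp =>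
    hqx ((mem_closedNbhd_iff_of_mem_twinClass hqp).2 (mem_closedNbhd_comm.1 hx))
  rw [← h.card_inter_closedNbhd hyz]
  refine card_lt_card ((ssubset_iff_of_subset ?_).2 ⟨q, hqyz, hq_notMem⟩)
  exact subset_inter (twinClass_subset_closedNbhd hy) (twinClass_subset_closedNbhd hz)

/-- If `p` is the centre of a `3`-claw, then deleting the twins of `p` from `N[p]` leaves a
coedge-regular graph with a smaller but still positive `μ` that contains the leaves of the claw. -/
theorem indepSetFree_three (h : IsCoedgeRegular G k μ) (hμ : μ ≠ 0) (hq : ¬ HasQuadrangle G)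
    (hfree : G.IndepSetFree 4) : G.IndepSetFree 3 := by
  classical
  induction μ using Nat.strong_induction_on generalizing V k with
  | _ μ ih =>
    by_cases hclaw : HasClaw G 3
    · obtain ⟨p, x, y, z, hxy, hxz, hyz, hx, hy, hz⟩ := hasClaw_three_iff.1 hclaw
      have htwin_pos : 0 < #(twinClass G p) := card_pos.2 ⟨p, mem_twinClass.2 rfl⟩
      have htwin_lt : #(twinClass G p) < μ := h.card_twinClass_lt hq hfree hxy hxz hyz hx hy hz
      have : (G.induce (closedNbhd G p \ twinClass G p : Finset V)).LocallyFinite :=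
        fun _ => inferInstance
      obtain ⟨k', hlocal⟩ := h.exists_isCoedgeRegular_induce_sdiff_twinClass hq p
      have hlocal_free := ih (μ - #(twinClass G p)) (by omega) hlocal (by omega)
        (fun hquad => hq hquad.of_induce) (indepSetFree_induce_iff.2 fun s _ => hfree s)
      have leaf_mem {u v : V} (hu : u ∈ closedNbhd G p) (hv : v ∈ closedNbhd G p)
          (huv : v ∉ closedNbhd G u) : u ∈ closedNbhd G p \ twinClass G p :=
        mem_sdiff.2 ⟨hu, fun hup => huv (mem_twinClass.1 hup ▸ hv)⟩
      refine absurd (isNIndepSet_three_iff.2 ⟨x, y, z, hxy, hxz, hyz, rfl⟩)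
        (indepSetFree_induce_iff.1 hlocal_free ?_)
      simp only [coe_insert, coe_singleton, Set.insert_subset_iff, Set.singleton_subset_iff,
        mem_coe]
      exact ⟨leaf_mem hx hy hxy, leaf_mem hy hz hyz,
        leaf_mem hz hy fun hzy => hyz (mem_closedNbhd_comm.1 hzy)⟩
    · exact h.indepSetFree_three_of_not_hasClaw hμ hq hfree hclaw

end IsCoedgeRegular

namespace IsAmplyRegular_s6

variable {V : Type*} {G : SimpleGraph V} [G.LocallyFinite] {k l μ : ℕ}

theorem card_inter_closedNbhd [DecidableEq V] (h : IsAmplyRegular_s6 G k l μ) {v w u : V}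
    (hvw : w ∉ closedNbhd G v) (huv : u ∈ closedNbhd G v) (huw : u ∈ closedNbhd G w) :
    #(closedNbhd G v ∩ closedNbhd G w) = μ := by
  have hcommon := coe_inter_closedNbhd_of_notMem hvw
  have hu : u ∈ G.commonNeighbors v w := by
    rw [← hcommon, mem_coe, mem_inter]
    exact ⟨huv, huw⟩
  rw [← Set.ncard_coe_finset, hcommon, h.ncard_commonNeighbors_of_dist]
  exact dist_eq_two_iff_compl_adj.2 ⟨compl_adj_iff_notMem_closedNbhd.2 hvw, u, hu⟩

theorem card_inter_closedNbhd_of_adj [DecidableEq V] (h : IsAmplyRegular_s6 G k l μ) {v w : V}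
    (hvw : G.Adj v w) : #(closedNbhd G v ∩ closedNbhd G w) = l + 2 := by
  rw [_root_.card_inter_closedNbhd_of_adj hvw, h.ncard_commonNeighbors_of_adj hvw]

/-- The leaves `y` of a claw with centre `x` give `t` subsets `N(x) ∩ N[y]` of `N(x)` of size
`l + 1`, two of which must meet. -/
theorem two_le_of_hasClaw (h : IsAmplyRegular_s6 G k l μ) {t : ℕ} (hk : k < t * (l + 1))
    (hclaw : HasClaw G t) : 2 ≤ μ := by
  classical
  obtain ⟨x, s, rfl, hadj, hindep⟩ := hclaw
  have hcard {y : V} (hy : y ∈ s) : #((closedNbhd G x ∩ closedNbhd G y).erase x) = l + 1 := by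
    rw [card_erase_of_mem, h.card_inter_closedNbhd_of_adj (hadj y hy), Nat.succ_sub_one]
    exact mem_inter.2 ⟨self_mem_closedNbhd x, mem_closedNbhd.2 (Or.inr (hadj y hy).symm)⟩
  obtain ⟨y, hy, z, hz, hne, w, hwy, hwz⟩ : ∃ y ∈ s, ∃ z ∈ s, y ≠ z ∧
      ∃ w ∈ (closedNbhd G x ∩ closedNbhd G y).erase x,
        w ∈ (closedNbhd G x ∩ closedNbhd G z).erase x := by
    by_contra! hdisj
    have hunion := card_biUnion fun y hy z hz hne =>
      Finset.disjoint_left.2 (hdisj y hy z hz hne)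
    have hsub : (s.biUnion fun y => (closedNbhd G x ∩ closedNbhd G y).erase x) ⊆
        (closedNbhd G x).erase x :=
      biUnion_subset.2 fun y _ => erase_subset_erase x inter_subset_left
    have hle := card_le_card hsub
    rw [hunion, sum_congr rfl fun y hy => hcard hy, sum_const, smul_eq_mul,
      card_erase_of_mem (self_mem_closedNbhd x), card_closedNbhd,
      h.isRegularOfDegree x] at hle
    omega
  have hyz : z ∉ closedNbhd G y := compl_adj_iff_notMem_closedNbhd.1 ⟨hne, hindep hy hz hne⟩
  have hxy : x ∈ closedNbhd G y := mem_closedNbhd.2 (Or.inr (hadj y hy).symm)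
  have hxz : x ∈ closedNbhd G z := mem_closedNbhd.2 (Or.inr (hadj z hz).symm)
  simp only [mem_erase, mem_inter] at hwy hwz
  rw [← h.card_inter_closedNbhd hyz hxy hxz]
  exact one_lt_card.2 ⟨x, mem_inter.2 ⟨hxy, hxz⟩, w, mem_inter.2 ⟨hwy.2.2, hwz.2.2⟩, hwy.1.symm⟩

theorem isCoedgeRegular_induce_neighborFinset (h : IsAmplyRegular_s6 G k l μ)
    (hq : ¬ HasQuadrangle G) (x : V) [(G.induce (G.neighborFinset x : Set V)).LocallyFinite] :
    IsCoedgeRegular (G.induce (G.neighborFinset x : Set V)) l (μ - 1) := by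
  classical
  have hrest : closedNbhd G x \ G.neighborFinset x = {x} := by
    rw [closedNbhd, cons_eq_insert, insert_sdiff_cancel (G.notMem_neighborFinset_self x)]
  have mem_of_mem {y : V} (hy : y ∈ G.neighborFinset x) : x ∈ closedNbhd G y :=
    mem_closedNbhd.2 (Or.inr ((G.mem_neighborFinset x y).1 hy).symm)
  have hlocal := isCoedgeRegular_induce hq (subset_cons _)
    (fun y hy => hrest.trans_subset (singleton_subset_iff.2 (mem_of_mem hy)))
    (fun y hy => h.card_inter_closedNbhd_of_adj ((G.mem_neighborFinset x y).1 hy))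
    fun y hy z hz hyz => h.card_inter_closedNbhd hyz (mem_of_mem hy) (mem_of_mem hz)
  rwa [hrest, card_singleton] at hlocal

end IsAmplyRegular_s6

theorem statement6_general {V : Type*} {G : SimpleGraph V} [G.LocallyFinite] {k l μ : ℕ}
    (h : IsAmplyRegular_s6 G k l μ) (hk : k < 3 * (l + 1)) (hclaw3 : HasClaw G 3)
    (hclaw4 : ¬ HasClaw G 4) : HasQuadrangle G ∧ 2 ≤ μ := by
  classical
  have hμ : 2 ≤ μ := h.two_le_of_hasClaw hk hclaw3
  refine ⟨by_contra fun hq => ?_, hμ⟩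
  obtain ⟨x, hx⟩ := hasClaw_iff_not_indepSetFreeOn.1 hclaw3
  rw [hasClaw_iff_not_indepSetFreeOn, not_exists_not] at hclaw4
  have hlocal := h.isCoedgeRegular_induce_neighborFinset hq x
  rw [← coe_neighborFinset, ← indepSetFree_induce_iff] at hx
  refine hx (hlocal.indepSetFree_three (by omega) (fun hquad => hq hquad.of_induce) ?_)
  rw [indepSetFree_induce_iff, coe_neighborFinset]
  exact hclaw4 x

theorem IsDRG.isAmplyRegular_s6 {V : Type*} [Fintype V] {G : SimpleGraph V} [G.LocallyFinite] {D : ℕ}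
    {b c : ℕ → ℕ} (h : IsDRG G D b c) : IsAmplyRegular_s6 G (b 0) (b 0 - b 1 - 1) (c 2) := by
  classical
  obtain ⟨-, -, hD, -, -, -, hcount⟩ := h
  have hdegree (v : V) : G.degree v = b 0 := by
    rw [← (hcount 0 (Nat.zero_le D) v v dist_self).2, ← card_neighborFinset_eq_degree,
      ← Set.ncard_coe_finset, coe_neighborFinset]
    congr 1
    ext w
    simp
  refine ⟨hdegree, fun v w hvw => ?_, fun v w hvw => ?_⟩
  · have hdist : G.dist v w = 1 := dist_eq_one_iff_adj.2 hvw
    have hb := (hcount 1 (hdist ▸ hD v w) v w hdist).2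
    have hset : {z | G.Adj w z ∧ G.dist v z = 1 + 1} = ↑(closedNbhd G w \ closedNbhd G v) := by
      ext z
      rw [Set.mem_ofPred_eq, one_add_one_eq_two, dist_eq_two_iff_compl_adj,
        compl_adj_iff_notMem_closedNbhd, mem_coe, mem_sdiff, mem_closedNbhd (v := w)]
      constructor
      · rintro ⟨hwz, hvz, -⟩
        exact ⟨Or.inr hwz, hvz⟩
      · rintro ⟨rfl | hwz, hvz⟩
        · exact absurd (mem_closedNbhd.2 (Or.inr hvw)) hvz
        · exact ⟨hwz, hvz, w, hvw, hwz.symm⟩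
    have hcard := card_sdiff_add_card_inter (closedNbhd G w) (closedNbhd G v)
    rw [hset, Set.ncard_coe_finset] at hb
    rw [inter_comm, card_inter_closedNbhd_of_adj hvw, card_closedNbhd, hdegree, hb] at hcard
    omega
  · rw [← (hcount 2 (hvw ▸ hD v w) v w hvw).1]
    congr 1
    ext z
    simp [mem_commonNeighbors, and_comm]

/-- a DRG with `D ≥ 3`, `3 ≤ k < 3(a₁+1)`, with a 3-claw but no 4-claws,
contains an induced quadrangle; in particular `c₂ ≥ 2`. -/
theorem statement6 {V : Type*} [Fintype V] (G : SimpleGraph V) (D : ℕ) (b c : ℕ → ℕ)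
    (hdrg : IsDRG G D b c) (hD : 3 ≤ D) (hk : 3 ≤ b 0)
    (hk' : (b 0 : ℤ) < 3 * (((b 0 : ℤ) - b 1 - c 1) + 1))
    (hclaw3 : HasClaw G 3) (hclaw4 : ¬ HasClaw G 4) :
    HasQuadrangle G ∧ 2 ≤ c 2 := by
  classical
  refine statement6_general hdrg.isAmplyRegular_s6 ?_ hclaw3 hclaw4
  obtain ⟨-, -, -, -, hc1, -⟩ := hdrg
  omega
end
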